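/- Let ω be a germ of symplectic form on ℝ^{2n} (a smooth 2-form defined near 0 with dω = 0 near 0 and ω(x) a non-degenerate bilinear form for every x near 0). Let f_1, f_2 : (ℝ,0)→(ℝ^{2n},0) be quasi-homogeneous curve-germs, i.e. each is A-equivalent to a monomial curve t↦(t^{μ_1},…,t^{μ_k},0,…,0) for some positive integers μ_1<…<μ_k linearly independent over non-negative integers. Then the following are equivalent: (a) f_1 and f_2 are symplectomorphic in (ℝ^{2n},ω), i.e. there exist a germ of diffeomorphism φ:(ℝ,0)→(ℝ,0) and a germ of diffeomorphism Φ:(ℝ^{2n},0)→(ℝ^{2n},0) with Φ^*ω = ω near 0 and Φ∘f_1 = f_2∘φ near 0; (b) the algebraic restrictions [ω]_{f_1} and [ω]_{f_2} are diffeomorphic, i.e. there exist germs of diffeomorphisms Θ:(ℝ^{2n},0)→(ℝ^{2n},0) and ψ:(ℝ,0)→(ℝ,0) with Θ∘f_1 = f_2∘ψ near 0 such that Θ^*ω and ω have the same algebraic restriction to f_1. -/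

import Mathlib

open Filter Topology

noncomputable section

/-- A (set-theoretic) differential 1-form on `ℝ^m`: a map assigning to each point a
function on tangent vectors. -/
def Form1 (m : ℕ) := (Fin m → ℝ) → (Fin m → ℝ) → ℝ

/-- A (set-theoretic) differential 2-form on `ℝ^m`. -/
def Form2 (m : ℕ) := (Fin m → ℝ) → (Fin m → ℝ) → (Fin m → ℝ) → ℝ

/-- A germ at `0` of a smooth differential 1-form: pointwise linear in the tangent
vector, and with coefficients smooth on a neighbourhood of `0`. -/
def IsForm1 (m : ℕ) (β : Form1 m) : Prop :=
  (∀ x u₁ u₂ (c : ℝ), β x (u₁ + c • u₂) = β x u₁ + c * β x u₂) ∧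
  (∀ u, ∃ U ∈ 𝓝 (0 : Fin m → ℝ), ContDiffOn ℝ (⊤ : ℕ∞) (fun x => β x u) U)

/-- A germ at `0` of a smooth differential 2-form: pointwise bilinear and alternating
in the tangent vectors, with coefficients smooth on a neighbourhood of `0`. -/
def IsForm2 (m : ℕ) (ω : Form2 m) : Prop :=
  (∀ x u₁ u₂ v (c : ℝ), ω x (u₁ + c • u₂) v = ω x u₁ v + c * ω x u₂ v) ∧
  (∀ x u v, ω x u v = - ω x v u) ∧
  (∀ u v, ∃ U ∈ 𝓝 (0 : Fin m → ℝ), ContDiffOn ℝ (⊤ : ℕ∞) (fun x => ω x u v) U)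

/-- The exterior derivative of a 1-form, evaluated on a pair of (constant) vectors. -/
def extD1 (m : ℕ) (β : Form1 m) : Form2 m :=
  fun x u v => fderiv ℝ (fun y => β y v) x u - fderiv ℝ (fun y => β y u) x v

/-- The exterior derivative of a 2-form, evaluated on a triple of (constant) vectors. -/
def extD2 (m : ℕ) (ω : Form2 m) (x u v w : Fin m → ℝ) : ℝ :=
  fderiv ℝ (fun y => ω y v w) x u - fderiv ℝ (fun y => ω y u w) x v
    + fderiv ℝ (fun y => ω y u v) x w

/-- A 2-form is closed near `0` if its exterior derivative vanishes near `0`. -/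
def Closed2 (m : ℕ) (ω : Form2 m) : Prop :=
  ∀ᶠ x in 𝓝 (0 : Fin m → ℝ), ∀ u v w, extD2 m ω x u v w = 0

/-- A 1-form vanishes on the image of a curve-germ. -/
def VanishesOn1 (m : ℕ) (β : Form1 m) (f : ℝ → (Fin m → ℝ)) : Prop :=
  ∀ᶠ t in 𝓝 (0 : ℝ), ∀ u, β (f t) u = 0

/-- A 2-form vanishes on the image of a curve-germ. -/
def VanishesOn2 (m : ℕ) (ω : Form2 m) (f : ℝ → (Fin m → ℝ)) : Prop :=
  ∀ᶠ t in 𝓝 (0 : ℝ), ∀ u v, ω (f t) u v = 0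

/-- A 2-form `ω` has zero algebraic restriction to the curve-germ `f` if `ω = α + dβ`
near `0` for a smooth 2-form `α` and a smooth 1-form `β` both vanishing on `im f`. -/
def ZeroAR2 (m : ℕ) (ω : Form2 m) (f : ℝ → (Fin m → ℝ)) : Prop :=
  ∃ (α : Form2 m) (β : Form1 m), IsForm2 m α ∧ IsForm1 m β ∧
    VanishesOn2 m α f ∧ VanishesOn1 m β f ∧
    ∀ᶠ x in 𝓝 (0 : Fin m → ℝ), ∀ u v, ω x u v = α x u v + extD1 m β x u v

/-- Two 2-forms have the same algebraic restriction to `f` if their difference has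
zero algebraic restriction to `f`. -/
def SameAR2 (m : ℕ) (ω₁ ω₂ : Form2 m) (f : ℝ → (Fin m → ℝ)) : Prop :=
  ZeroAR2 m (fun x u v => ω₁ x u v - ω₂ x u v) f

/-- The pullback of a 2-form by a (germ of) smooth map. -/
def pull2 (m : ℕ) (Φ : (Fin m → ℝ) → (Fin m → ℝ)) (ω : Form2 m) : Form2 m :=
  fun x u v => ω (Φ x) (fderiv ℝ Φ x u) (fderiv ℝ Φ x v)

/-- A germ of diffeomorphism of `(ℝ,0)`. -/
def IsDiffeoGerm1 (φ : ℝ → ℝ) : Prop :=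
  φ 0 = 0 ∧ (∃ U ∈ 𝓝 (0 : ℝ), ContDiffOn ℝ (⊤ : ℕ∞) φ U) ∧ deriv φ 0 ≠ 0

/-- A germ of diffeomorphism of `(ℝ^m,0)`. -/
def IsDiffeoGerm (m : ℕ) (Φ : (Fin m → ℝ) → (Fin m → ℝ)) : Prop :=
  Φ 0 = 0 ∧ (∃ U ∈ 𝓝 (0 : Fin m → ℝ), ContDiffOn ℝ (⊤ : ℕ∞) Φ U) ∧
    ∃ D : (Fin m → ℝ) ≃L[ℝ] (Fin m → ℝ),
      HasFDerivAt Φ (D : (Fin m → ℝ) →L[ℝ] (Fin m → ℝ)) 0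

/-- The constant 2-form `dxᵢ ∧ dxⱼ` on `ℝ^m` (indices `0`-based). -/
def wedge (m : ℕ) (i j : Fin m) : Form2 m := fun _ u v => u i * v j - u j * v i

/-- The 2-form `x_l · dxᵢ ∧ dxⱼ` on `ℝ^m` (indices `0`-based). -/
def mwedge (m : ℕ) (l i j : Fin m) : Form2 m :=
  fun x u v => x l * (u i * v j - u j * v i)

/-- A curve-germ: a `C^∞` map from a neighbourhood of `0` in `ℝ` to `ℝ^m` sending `0` to `0`. -/
def IsCurveGerm (m : ℕ) (f : ℝ → (Fin m → ℝ)) : Prop :=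
  f 0 = 0 ∧ ∃ U ∈ 𝓝 (0 : ℝ), ContDiffOn ℝ (⊤ : ℕ∞) f U

/-- `A`-equivalence of curve-germs. -/
def AEquiv (m : ℕ) (f g : ℝ → (Fin m → ℝ)) : Prop :=
  ∃ φ Φ, IsDiffeoGerm1 φ ∧ IsDiffeoGerm m Φ ∧ ∀ᶠ t in 𝓝 (0 : ℝ), Φ (f t) = g (φ t)

/-- Positive integers `μ 0, …, μ (k-1)` are linearly independent over non-negative
integers: no `μ j` is a `ℕ`-linear combination of the others. -/
def LinIndepNonneg {k : ℕ} (μ : Fin k → ℕ) : Prop :=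
  ∀ j : Fin k, ∀ c : Fin k → ℕ, μ j ≠ ∑ i ∈ Finset.univ.erase j, c i * μ i

/-- A quasi-homogeneous curve-germ: one `A`-equivalent to a monomial curve
`t ↦ (t^{μ₁},…,t^{μ_k},0,…,0)` with `μ₁ < … < μ_k` positive and linearly independent
over non-negative integers. -/
def IsQuasiHomogeneousCurve (m : ℕ) (f : ℝ → (Fin m → ℝ)) : Prop :=
  ∃ k : ℕ, 1 ≤ k ∧ k ≤ m ∧ ∃ μ : Fin k → ℕ,
    StrictMono μ ∧ (∀ i, 0 < μ i) ∧ LinIndepNonneg μ ∧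
    AEquiv m f (fun t i => if h : (i : ℕ) < k then t ^ μ ⟨i, h⟩ else 0)

/-- A germ of symplectic form on `ℝ^m`: a smooth 2-form, closed near `0`, and
pointwise non-degenerate near `0`. -/
def IsSymplecticGerm (m : ℕ) (ω : Form2 m) : Prop :=
  IsForm2 m ω ∧ Closed2 m ω ∧
    ∀ᶠ x in 𝓝 (0 : Fin m → ℝ), ∀ u, (∀ v, ω x u v = 0) → u = 0

section Part1

def nemOp {M F : Type} [TopologicalSpace M] [TopologicalSpace F]
    (V : M → F) (hV : Continuous V) (γ : C(unitInterval, M)) : C(unitInterval, F) :=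
  (⟨V, hV⟩ : C(M, F)).comp γ

lemma nemOp_continuous {M F : Type} [TopologicalSpace M] [TopologicalSpace F]
    (V : M → F) (hV : Continuous V) : Continuous (nemOp V hV) :=
  ContinuousMap.continuous_postcomp _

def mulOp (M F : Type) [NormedAddCommGroup M] [NormedSpace ℝ M]
    [NormedAddCommGroup F] [NormedSpace ℝ F] :
    C(unitInterval, M →L[ℝ] F) →L[ℝ] C(unitInterval, M) →L[ℝ] C(unitInterval, F) :=
  LinearMap.mkContinuous₂
    (LinearMap.mk₂ ℝ (fun (A : C(unitInterval, M →L[ℝ] F)) (γ : C(unitInterval, M)) => (⟨fun s => A s (γ s), by fun_prop⟩ : C(unitInterval, F)))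
      (by intros; ext; simp) (by intros; ext; simp) (by intros; ext; simp) (by intros; ext; simp))
    1 (by
      intro A γ
      rw [ContinuousMap.norm_le _ (by positivity)]
      intro s
      have h1 := A.norm_coe_le_norm s
      have h2 := γ.norm_coe_le_norm s
      calc ‖A s (γ s)‖ ≤ ‖A s‖ * ‖γ s‖ := (A s).le_opNorm _
        _ ≤ 1 * ‖A‖ * ‖γ‖ := by rw [one_mul]; gcongr)

lemma mulOp_apply {M F : Type} [NormedAddCommGroup M] [NormedSpace ℝ M]
    [NormedAddCommGroup F] [NormedSpace ℝ F] (A : C(unitInterval, M →L[ℝ] F))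
    (γ : C(unitInterval, M)) (s : unitInterval) : mulOp M F A γ s = A s (γ s) := rfl

lemma nemOp_hasFDerivAt {M F : Type} [NormedAddCommGroup M] [NormedSpace ℝ M]
    [NormedAddCommGroup F] [NormedSpace ℝ F]
    (V : M → F) (hV : ContDiff ℝ 1 V) (γ : C(unitInterval, M)) :
    HasFDerivAt (nemOp V hV.continuous)
      (mulOp M F (nemOp (fderiv ℝ V) (hV.continuous_fderiv (by norm_num)) γ)) γ := by
  rw [hasFDerivAt_iff_isLittleO_nhds_zero, Asymptotics.isLittleO_iff]
  intro ε hε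
  have hc := (nemOp_continuous (fderiv ℝ V) (hV.continuous_fderiv (by norm_num))).continuousAt
    (x := γ)
  replace hc := (Metric.continuousAt_iff (f := nemOp (fderiv ℝ V) (hV.continuous_fderiv (by norm_num))) (a := γ)).1 hc
  obtain ⟨δ, hδ, h⟩ := hc ε hε
  filter_upwards [Metric.ball_mem_nhds (0 : C(unitInterval, M)) hδ] with η hη
  rw [mem_ball_zero_iff] at hη
  rw [ContinuousMap.norm_le _ (by positivity)]
  intro s
  have hηs : ‖η s‖ < δ := (η.norm_coe_le_norm s).trans_lt hη
  have key := (convex_ball (γ s) δ).norm_image_sub_le_of_norm_hasFDerivWithin_le' (f := V)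
    (f' := fderiv ℝ V) (φ := fderiv ℝ V (γ s)) (C := ε) (x := γ s) (y := γ s + η s)
    (fun x _ => ((hV.differentiable (by norm_num)) x).hasFDerivAt.hasFDerivWithinAt)
    (by
      intro x hx
      have := h (x := γ + ContinuousMap.const _ (x - γ s)) (by
        rw [dist_eq_norm, add_sub_cancel_left, ContinuousMap.norm_lt_iff _ hδ]
        intro t
        simpa [dist_eq_norm] using hx)
      have := (ContinuousMap.dist_apply_le_dist s).trans_lt this
      rw [dist_eq_norm] at this
      simp only [nemOp, ContinuousMap.comp_apply, ContinuousMap.coe_mk,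
        ContinuousMap.add_apply, ContinuousMap.const_apply, add_sub_cancel] at this
      exact this.le)
    (Metric.mem_ball_self hδ) (by simpa [dist_eq_norm] using hηs)
  simp only [add_sub_cancel_left] at key
  calc _ = ‖V (γ s + η s) - V (γ s) - fderiv ℝ V (γ s) (η s)‖ := rfl
    _ ≤ ε * ‖η s‖ := key
    _ ≤ ε * ‖η‖ := by gcongr; exact η.norm_coe_le_norm s

lemma nemOp_contDiff_nat {M : Type} [NormedAddCommGroup M] [NormedSpace ℝ M] (n : ℕ) :
    ∀ {F : Type} [NormedAddCommGroup F] [NormedSpace ℝ F]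
    (V : M → F) (hV : ContDiff ℝ n V), ContDiff ℝ n (nemOp V hV.continuous) := by
  induction n with
  | zero =>
    intro F _ _ V hV
    exact contDiff_zero.2 (nemOp_continuous _ _)
  | succ n ih =>
    intro F _ _ V hV
    have h1 : ContDiff ℝ 1 V := hV.of_le (by exact_mod_cast Nat.succ_le_succ (Nat.zero_le n))
    have h2 : ContDiff ℝ n (fderiv ℝ V) := hV.fderiv_right (by norm_cast)
    have := ih (fderiv ℝ V) h2
    push_cast
    rw [contDiff_succ_iff_hasFDerivAt (n := n)]
    refine ⟨fun γ => mulOp M F (nemOp (fderiv ℝ V) h2.continuous γ), ?_, fun γ => ?_⟩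
    · exact (ContinuousLinearMap.contDiff (E := C(unitInterval, M →L[ℝ] F))
        (F := C(unitInterval, M) →L[ℝ] C(unitInterval, F)) (mulOp M F)).comp this
    · exact nemOp_hasFDerivAt V h1 γ

lemma nemOp_contDiff {M F : Type} [NormedAddCommGroup M] [NormedSpace ℝ M]
    [NormedAddCommGroup F] [NormedSpace ℝ F]
    (V : M → F) (hV : ContDiff ℝ (⊤ : ℕ∞) V) : ContDiff ℝ (⊤ : ℕ∞) (nemOp V hV.continuous) := by
  rw [contDiff_infty]
  intro n
  exact nemOp_contDiff_nat n V (hV.of_le (by exact_mod_cast le_top))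

end Part1

section Part2

set_option linter.unusedSectionVars false

section intOp
variable {F : Type} [NormedAddCommGroup F] [NormedSpace ℝ F]

def extI (γ : C(unitInterval, F)) : ℝ → F := fun τ => γ (Set.projIcc 0 1 zero_le_one τ)

lemma extI_cont (γ : C(unitInterval, F)) : Continuous (extI γ) :=
  γ.continuous.comp continuous_projIcc

lemma extI_of_mem (γ : C(unitInterval, F)) {τ : ℝ} (h : τ ∈ Set.Icc (0:ℝ) 1) :
    extI γ τ = γ ⟨τ, h⟩ := by
  simp [extI, Set.projIcc_of_mem zero_le_one h]

def intOp (F : Type) [NormedAddCommGroup F] [NormedSpace ℝ F] :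
    C(unitInterval, F) →L[ℝ] C(unitInterval, F) :=
  LinearMap.mkContinuous
    { toFun := fun γ => ⟨fun s => ∫ τ in (0:ℝ)..s, extI γ τ,
        (intervalIntegral.continuous_primitive
          (fun a b => (extI_cont γ).intervalIntegrable a b) 0).comp continuous_subtype_val⟩
      map_add' := by
        intro a b
        ext s
        exact intervalIntegral.integral_add ((extI_cont a).intervalIntegrable _ _)
          ((extI_cont b).intervalIntegrable _ _)
      map_smul' := by
        intro c a
        ext s
        exact intervalIntegral.integral_smul c (extI a) }
    1 (by
      intro γ
      rw [ContinuousMap.norm_le _ (by positivity)]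
      intro s
      have h := intervalIntegral.norm_integral_le_of_norm_le_const (a := 0) (b := (s:ℝ))
        (f := extI γ) (C := ‖γ‖) (fun x _ => γ.norm_coe_le_norm _)
      refine h.trans ?_
      rw [sub_zero, abs_of_nonneg s.2.1, one_mul]
      exact mul_le_of_le_one_right (norm_nonneg _) s.2.2)

lemma intOp_apply (γ : C(unitInterval, F)) (s : unitInterval) :
    intOp F γ s = ∫ τ in (0:ℝ)..s, extI γ τ := rfl
end intOp

section param
variable {E F : Type} [NormedAddCommGroup E] [NormedSpace ℝ E]
  [NormedAddCommGroup F] [NormedSpace ℝ F]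

/-- the path `s ↦ (s, x)` -/
def pathOp (x : E) : C(unitInterval, ℝ × E) := ⟨fun s => ((s:ℝ), x), by fun_prop⟩

def constOp (E : Type) [NormedAddCommGroup E] [NormedSpace ℝ E] : E →L[ℝ] C(unitInterval, E) :=
  LinearMap.mkContinuous
    { toFun := fun x => ContinuousMap.const _ x
      map_add' := fun _ _ => rfl
      map_smul' := fun _ _ => rfl } 1 (by
      intro x
      rw [ContinuousMap.norm_le _ (by positivity)]
      intro s
      rw [one_mul]
      exact le_refl ‖x‖)

lemma constOp_apply (x : E) (s : unitInterval) : constOp E x s = x := rfl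

lemma pathOp_eq (x : E) :
    pathOp x = pathOp 0 + constOp (ℝ × E) (ContinuousLinearMap.inr ℝ ℝ E x) := by
  ext s <;> simp [pathOp, constOp_apply]

lemma pathOp_hasFDerivAt (x : E) : HasFDerivAt (pathOp (E := E))
    ((constOp (ℝ × E)).comp (ContinuousLinearMap.inr ℝ ℝ E)) x := by
  have h : pathOp (E := E) = fun x => pathOp 0 +
    ((constOp (ℝ × E)).comp (ContinuousLinearMap.inr ℝ ℝ E)) x := funext pathOp_eq
  rw [h]
  exact (ContinuousLinearMap.hasFDerivAt (E := E) (F := C(unitInterval, ℝ × E))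
    ((constOp (ℝ × E)).comp (ContinuousLinearMap.inr ℝ ℝ E))).const_add _

lemma pathOp_contDiff : ContDiff ℝ (⊤ : ℕ∞) (pathOp (E := E)) := by
  have h : pathOp (E := E) = fun x => pathOp 0 +
    ((constOp (ℝ × E)).comp (ContinuousLinearMap.inr ℝ ℝ E)) x := funext pathOp_eq
  rw [h]
  exact contDiff_const.add (ContinuousLinearMap.contDiff (E := E) (F := C(unitInterval, ℝ × E))
    ((constOp (ℝ × E)).comp (ContinuousLinearMap.inr ℝ ℝ E)))

def evOne (F : Type) [NormedAddCommGroup F] [NormedSpace ℝ F] : C(unitInterval, F) →L[ℝ] F :=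
  ContinuousMap.evalCLM ℝ 1

lemma evOne_apply (γ : C(unitInterval, F)) : evOne F γ = γ 1 := rfl

def totInt (F : Type) [NormedAddCommGroup F] [NormedSpace ℝ F] : C(unitInterval, F) →L[ℝ] F :=
  (evOne F).comp (intOp F)

lemma totInt_apply (γ : C(unitInterval, F)) (k : ℝ → F)
    (h : ∀ s : unitInterval, γ s = k s) : totInt F γ = ∫ t in (0:ℝ)..1, k t := by
  change ∫ τ in (0:ℝ)..1, extI γ τ = _
  apply intervalIntegral.integral_congr
  intro t ht
  rw [Set.uIcc_of_le zero_le_one] at ht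
  simp only [extI_of_mem γ ht, h]

lemma param_int_eq (k : ℝ × E → F) (hk : Continuous k) (x : E) :
    ∫ t in (0:ℝ)..1, k (t, x) = totInt F (nemOp k hk (pathOp x)) := by
  rw [totInt_apply _ (fun t => k (t, x))]
  intro s; rfl

lemma param_int_contDiff (k : ℝ × E → F) (hk : ContDiff ℝ (⊤ : ℕ∞) k) :
    ContDiff ℝ (⊤ : ℕ∞) (fun x => ∫ t in (0:ℝ)..1, k (t, x)) := by
  simp_rw [param_int_eq k hk.continuous]
  exact (ContinuousLinearMap.contDiff (E := C(unitInterval, F)) (totInt F)).comp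
    ((nemOp_contDiff k hk).comp pathOp_contDiff)

lemma param_int_fderiv (k : ℝ × E → F) (hk : ContDiff ℝ (⊤ : ℕ∞) k) (x u : E) :
    fderiv ℝ (fun x => ∫ t in (0:ℝ)..1, k (t, x)) x u =
      ∫ t in (0:ℝ)..1, fderiv ℝ k (t, x) (0, u) := by
  simp_rw [param_int_eq k hk.continuous]
  have h1 := nemOp_hasFDerivAt k (hk.of_le (by exact_mod_cast le_top)) (pathOp x)
  have h2 := h1.comp x (pathOp_hasFDerivAt x)
  have h3 := (ContinuousLinearMap.hasFDerivAt (E := C(unitInterval, F)) (F := F) (totInt F)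
    (x := nemOp k hk.continuous (pathOp x))).comp x h2
  have h4 := h3.fderiv
  have h5 : (totInt F ∘ nemOp k hk.continuous ∘ pathOp) =
    fun x => totInt F (nemOp k hk.continuous (pathOp x)) := rfl
  rw [h5] at h4
  rw [h4]
  simp only [ContinuousLinearMap.comp_apply]
  rw [totInt_apply _ (fun t => fderiv ℝ k (t, x) (0, u))]
  intro s
  rfl
end param

/-- Smooth inverse function theorem on a neighbourhood. -/
lemma smooth_inverse {X Y : Type} [NormedAddCommGroup X] [NormedSpace ℝ X] [CompleteSpace X]
    [NormedAddCommGroup Y] [NormedSpace ℝ Y] (f : X → Y)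
    (hf : ContDiff ℝ (⊤ : ℕ∞) f) (a : X) (f' : X ≃L[ℝ] Y) (hf' : HasFDerivAt f (f' : X →L[ℝ] Y) a) :
    ∃ g : Y → X, (∃ U ∈ 𝓝 (f a), IsOpen U ∧ ContDiffOn ℝ (⊤ : ℕ∞) g U) ∧ g (f a) = a ∧
      (∀ᶠ x in 𝓝 a, g (f x) = x) ∧ (∀ᶠ y in 𝓝 (f a), f (g y) = y) := by
  have hn : ((⊤ : ℕ∞) : WithTop ℕ∞) ≠ 0 := by simp
  let e := hf.contDiffAt.toOpenPartialHomeomorph f hf' hn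
  have hea : a ∈ e.source := hf.contDiffAt.mem_toOpenPartialHomeomorph_source hf' hn
  have hefa : f a ∈ e.target := e.map_source hea
  have hga : e.symm (f a) = a := e.left_inv hea
  refine ⟨e.symm, ?_, hga, ?_, ?_⟩
  · let O : Set X := (fderiv ℝ f) ⁻¹' (Set.range ((↑) : (X ≃L[ℝ] Y) → X →L[ℝ] Y))
    have hO : IsOpen O := ContinuousLinearEquiv.isOpen.preimage (hf.continuous_fderiv hn)
    have haO : a ∈ O := ⟨f', hf'.fderiv.symm⟩
    have hU : IsOpen (e.target ∩ e.symm ⁻¹' O) := e.isOpen_inter_preimage_symm hO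
    refine ⟨e.target ∩ e.symm ⁻¹' O, hU.mem_nhds ⟨hefa, ?_⟩, hU, ?_⟩
    · change e.symm (f a) ∈ O
      rw [hga]; exact haO
    · rintro y ⟨hy, f'', hf''⟩
      refine (e.contDiffAt_symm hy (f₀' := f'') ?_ hf.contDiffAt).contDiffWithinAt
      change HasFDerivAt f _ _
      rw [hf'']
      exact (hf.differentiable hn _).hasFDerivAt
  · filter_upwards [e.open_source.mem_nhds hea] with x hx using e.left_inv hx
  · filter_upwards [e.open_target.mem_nhds hefa] with x hx using e.right_inv hx

end Part2

section Part3

set_option linter.unusedSectionVars false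

section flow
variable {M : Type} [NormedAddCommGroup M] [NormedSpace ℝ M] [CompleteSpace M]

/-- linear path `s ↦ s • w` -/
def rampOp (w : M) : C(unitInterval, M) := ⟨fun s => (s:ℝ) • w, by fun_prop⟩

def flowG (V : M → M) (hV : Continuous V) :
    (ℝ × M) × C(unitInterval, M) → (ℝ × M) × C(unitInterval, M) :=
  fun z => (z.1, z.2 - z.1.1 • intOp M (nemOp V hV z.2))

lemma flowG_contDiff (V : M → M) (hV : ContDiff ℝ (⊤ : ℕ∞) V) :
    ContDiff ℝ (⊤ : ℕ∞) (flowG V hV.continuous) := by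
  have h1 : ContDiff ℝ (⊤ : ℕ∞) (fun z : (ℝ × M) × C(unitInterval, M) =>
      intOp M (nemOp V hV.continuous z.2)) :=
    (ContinuousLinearMap.contDiff (E := C(unitInterval, M)) (F := C(unitInterval, M))
      (intOp M)).comp ((nemOp_contDiff V hV).comp contDiff_snd)
  exact contDiff_fst.prodMk (contDiff_snd.sub ((contDiff_fst.comp contDiff_fst).smul h1))

/-- shear equivalence -/
def shearEquiv (Z : Type) [NormedAddCommGroup Z] [NormedSpace ℝ Z] (w : Z) :
    ((ℝ × M) × Z) ≃L[ℝ] ((ℝ × M) × Z) :=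
  ContinuousLinearEquiv.equivOfInverse
    ((ContinuousLinearMap.fst ℝ (ℝ × M) Z).prod (ContinuousLinearMap.snd ℝ (ℝ × M) Z -
      ((ContinuousLinearMap.fst ℝ ℝ M).comp (ContinuousLinearMap.fst ℝ (ℝ × M) Z)).smulRight w))
    ((ContinuousLinearMap.fst ℝ (ℝ × M) Z).prod (ContinuousLinearMap.snd ℝ (ℝ × M) Z +
      ((ContinuousLinearMap.fst ℝ ℝ M).comp (ContinuousLinearMap.fst ℝ (ℝ × M) Z)).smulRight w))
    (by intro z; ext <;> simp) (by intro z; ext <;> simp)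

lemma flowG_hasFDerivAt (V : M → M) (hV : ContDiff ℝ (⊤ : ℕ∞) V) (y0 : M) :
    HasFDerivAt (flowG V hV.continuous)
      (shearEquiv (M := M) C(unitInterval, M) (intOp M (nemOp V hV.continuous (constOp M y0))) :
        ((ℝ × M) × C(unitInterval, M)) →L[ℝ] ((ℝ × M) × C(unitInterval, M)))
      (((0:ℝ), y0), constOp M y0) := by
  have h1 : ContDiff ℝ (⊤ : ℕ∞) (fun z : (ℝ × M) × C(unitInterval, M) =>
      intOp M (nemOp V hV.continuous z.2)) :=
    (ContinuousLinearMap.contDiff (E := C(unitInterval, M)) (F := C(unitInterval, M))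
      (intOp M)).comp ((nemOp_contDiff V hV).comp contDiff_snd)
  have h2 := (h1.differentiable (by simp) (((0:ℝ), y0), constOp M y0)).hasFDerivAt
  have h3 : HasFDerivAt (fun z : (ℝ × M) × C(unitInterval, M) => z.1.1)
    ((ContinuousLinearMap.fst ℝ ℝ M).comp (ContinuousLinearMap.fst ℝ (ℝ × M) C(unitInterval, M)))
    (((0:ℝ), y0), constOp M y0) :=
    (hasFDerivAt_fst (𝕜 := ℝ) (p := ((0:ℝ), y0))).comp (((0:ℝ), y0), constOp M y0)
      (hasFDerivAt_fst (𝕜 := ℝ) (p := (((0:ℝ), y0), constOp M y0)))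
  have h4 := (hasFDerivAt_fst (𝕜 := ℝ) (p := (((0:ℝ), y0), constOp M y0))).prodMk
    ((hasFDerivAt_snd (𝕜 := ℝ) (p := (((0:ℝ), y0), constOp M y0))).sub (h3.smul h2))
  convert! h4 using 1
  ext z <;> simp [shearEquiv]

theorem exists_flow (V : M → M) (hV : ContDiff ℝ (⊤ : ℕ∞) V) (y0 w : M) :
    ∃ φ : ℝ × M → M, (∃ U ∈ 𝓝 ((0:ℝ), y0), IsOpen U ∧ ContDiffOn ℝ (⊤ : ℕ∞) φ U) ∧
      (∀ᶠ y in 𝓝 y0, φ (0, y) = y) ∧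
      (∀ᶠ p in 𝓝 ((0:ℝ), y0), HasDerivAt (fun s => φ (s, p.2)) (V (φ p)) p.1) ∧
      (∀ᶠ p in 𝓝 ((0:ℝ), y0), (∀ τ : ℝ, |τ| ≤ |p.1| → V (p.2 + τ • w) = w) →
        φ p = p.2 + p.1 • w) := by
  obtain ⟨g, ⟨U, hU, hUo, hgU⟩, hg0, hgl, hgr⟩ := smooth_inverse (flowG V hV.continuous)
    (flowG_contDiff V hV) _ _ (flowG_hasFDerivAt V hV y0)
  have hG0 : flowG V hV.continuous (((0:ℝ), y0), constOp M y0) = (((0:ℝ), y0), constOp M y0) := by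
    simp [flowG]
  rw [hG0] at hU hg0 hgr
  -- the lift
  let ι : ℝ × M → (ℝ × M) × C(unitInterval, M) := fun p => (p, constOp M p.2)
  have hι : ContDiff ℝ (⊤ : ℕ∞) ι := contDiff_id.prodMk
    ((ContinuousLinearMap.contDiff (E := M) (F := C(unitInterval, M)) (constOp M)).comp contDiff_snd)
  have hι0 : Tendsto ι (𝓝 ((0:ℝ), y0)) (𝓝 (((0:ℝ), y0), constOp M y0)) :=
    hι.continuous.tendsto ((0:ℝ), y0)
  let Γ : ℝ × M → C(unitInterval, M) := fun p => (g (ι p)).2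
  have hgc : ContinuousAt g (((0:ℝ), y0), constOp M y0) := (hgU.continuousOn).continuousAt hU
  have hΓc : Tendsto Γ (𝓝 ((0:ℝ), y0)) (𝓝 (constOp M y0)) := by
    have h1 : Tendsto g (𝓝 (((0:ℝ), y0), constOp M y0)) (𝓝 (((0:ℝ), y0), constOp M y0)) := by
      have := hgc.tendsto
      rwa [hg0] at this
    exact (continuous_snd.tendsto _).comp (h1.comp hι0)
  have hΓeq : ∀ᶠ p in 𝓝 ((0:ℝ), y0),
      Γ p - p.1 • intOp M (nemOp V hV.continuous (Γ p)) = constOp M p.2 := by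
    filter_upwards [hι0.eventually hgr] with p hp
    have h1 : (g (ι p)).1 = p := congrArg Prod.fst hp
    have h2 := congrArg Prod.snd hp
    simp only [flowG] at h2
    rw [h1] at h2
    exact h2
  -- uniqueness
  have huniq : ∀ᶠ z in 𝓝 (((0:ℝ), y0), constOp M y0),
      z.2 - z.1.1 • intOp M (nemOp V hV.continuous z.2) = constOp M z.1.2 → Γ z.1 = z.2 := by
    filter_upwards [hgl] with z hz h
    have : flowG V hV.continuous z = ι z.1 := Prod.ext rfl h
    change (g (ι z.1)).2 = z.2
    rw [← this, hz]
  obtain ⟨r, hr, hB⟩ := Metric.eventually_nhds_iff_ball.1 huniq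
  -- φ and its integral equation
  have hmain : ∀ᶠ p in 𝓝 ((0:ℝ), y0), ∀ s : unitInterval, Γ (p.1 * s, p.2) 1 = Γ p s := by
    have e1 : ∀ᶠ p in 𝓝 ((0:ℝ), y0), dist (Γ p) (constOp M y0) < r :=
      hΓc.eventually (Metric.ball_mem_nhds _ hr)
    filter_upwards [hΓeq, e1, Metric.ball_mem_nhds ((0:ℝ), y0) hr] with p hp hd hpr s
    let γ' : C(unitInterval, M) := ⟨fun τ => Γ p (s * τ), by fun_prop⟩
    have hz := hB ((p.1 * s, p.2), γ') ?_ ?_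
    · change Γ (p.1 * s, p.2) = γ' at hz
      rw [hz]
      change Γ p (s * 1) = Γ p s
      rw [mul_one]
    · rw [Metric.mem_ball, Prod.dist_eq, max_lt_iff, Prod.dist_eq, max_lt_iff]
      rw [Metric.mem_ball, Prod.dist_eq, max_lt_iff] at hpr
      refine ⟨⟨?_, hpr.2⟩, ?_⟩
      · refine lt_of_le_of_lt ?_ hpr.1
        simp only [dist_zero_right, norm_mul]
        exact mul_le_of_le_one_right (norm_nonneg _)
          (by rw [Real.norm_eq_abs, abs_of_nonneg s.2.1]; exact s.2.2)
      · refine lt_of_le_of_lt ?_ hd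
        exact (ContinuousMap.dist_le dist_nonneg).2 fun τ =>
          ContinuousMap.dist_apply_le_dist (f := Γ p) (g := constOp M y0) (s * τ)
    · ext τ
      have h1 := DFunLike.congr_fun hp (s * τ)
      simp only [ContinuousMap.sub_apply, ContinuousMap.smul_apply, intOp_apply] at h1 ⊢
      refine Eq.trans ?_ h1
      change Γ p (s * τ) - _ = _
      congr 1
      rw [mul_smul]
      congr 1
      have h2 := intervalIntegral.smul_integral_comp_mul_left (a := (0:ℝ)) (b := (τ:ℝ))
        (f := extI (nemOp V hV.continuous (Γ p))) (s:ℝ)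
      rw [mul_zero] at h2
      have h3 : ((s * τ : unitInterval) : ℝ) = (s:ℝ) * τ := rfl
      rw [h3, ← h2]
      congr 1
      apply intervalIntegral.integral_congr
      intro x hx
      rw [Set.uIcc_of_le τ.2.1] at hx
      have hx' : x ∈ Set.Icc (0:ℝ) 1 := ⟨hx.1, hx.2.trans τ.2.2⟩
      simp only
      rw [extI_of_mem _ hx', extI_of_mem _ (τ := (s:ℝ) * x)
        ⟨mul_nonneg s.2.1 hx'.1, mul_le_one₀ s.2.2 hx'.1 hx'.2⟩]
      rfl
  let φ : ℝ × M → M := fun p => evOne M (Γ p)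
  have hφU : ContDiffOn ℝ (⊤ : ℕ∞) φ (ι ⁻¹' U) := by
    have h1 : ContDiffOn ℝ (⊤ : ℕ∞) (fun p => g (ι p)) (ι ⁻¹' U) :=
      hgU.comp hι.contDiffOn (Set.mapsTo_preimage _ _)
    exact (ContinuousLinearMap.contDiff (E := C(unitInterval, M)) (F := M) (evOne M)).comp_contDiffOn
      h1.snd
  have hUo' : IsOpen (ι ⁻¹' U) := hUo.preimage hι.continuous
  have hUm : ι ⁻¹' U ∈ 𝓝 ((0:ℝ), y0) := hι0 hU
  have hint : ∀ᶠ p in 𝓝 ((0:ℝ), y0), φ p = p.2 + ∫ σ in (0:ℝ)..p.1, V (φ (σ, p.2)) := by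
    filter_upwards [hΓeq, hmain] with p h1 h2
    have h3 := DFunLike.congr_fun h1 1
    simp only [ContinuousMap.sub_apply, ContinuousMap.smul_apply, intOp_apply,
      constOp_apply] at h3
    have h4 : φ p = p.2 + p.1 • ∫ τ in (0:ℝ)..((1:unitInterval):ℝ),
        extI (nemOp V hV.continuous (Γ p)) τ := by
      rw [← h3]; change Γ p 1 = _; abel
    rw [h4]
    congr 1
    have h5 := intervalIntegral.smul_integral_comp_mul_left (a := (0:ℝ)) (b := (1:ℝ))
        (f := fun σ => V (φ (σ, p.2))) p.1
    rw [mul_zero, mul_one] at h5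
    rw [← h5]
    congr 1
    apply intervalIntegral.integral_congr
    intro x hx
    have hx' : x ∈ Set.Icc (0:ℝ) 1 := by
      rwa [Set.uIcc_of_le (by exact zero_le_one)] at hx
    simp only
    rw [extI_of_mem _ hx']
    change V (Γ p ⟨x, hx'⟩) = V (Γ (p.1 * x, p.2) 1)
    rw [h2 ⟨x, hx'⟩]
  refine ⟨φ, ⟨_, hUm, hUo', hφU⟩, ?_, ?_, ?_⟩
  · have h0 : Tendsto (fun y : M => ((0:ℝ), y)) (𝓝 y0) (𝓝 ((0:ℝ), y0)) :=
      (Continuous.prodMk_right (0:ℝ)).tendsto y0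
    filter_upwards [h0.eventually hint] with y hy
    rw [hy]; simp
  · have hb := hint.and (Filter.eventually_mem_set.2 hUm)
    obtain ⟨ρ, hρ, hb⟩ := Metric.eventually_nhds_iff_ball.1 hb
    filter_upwards [Metric.ball_mem_nhds _ hρ] with p hp
    have hq : ∀ σ : ℝ, |σ| < ρ → (σ, p.2) ∈ Metric.ball ((0:ℝ), y0) ρ := by
      intro σ hσ
      rw [Metric.mem_ball, Prod.dist_eq, max_lt_iff] at hp ⊢
      exact ⟨by simpa using hσ, hp.2⟩
    have hp1 : |p.1| < ρ := by
      rw [Metric.mem_ball, Prod.dist_eq, max_lt_iff] at hp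
      simpa using hp.1
    have hcont : ContinuousOn (fun σ => V (φ (σ, p.2))) (Set.Ioo (-ρ) ρ) := by
      apply hV.continuous.comp_continuousOn
      apply hφU.continuousOn.comp (by fun_prop)
      intro σ hσ
      exact (hb _ (hq σ (abs_lt.2 hσ))).2
    have hmem : p.1 ∈ Set.Ioo (-ρ) ρ := abs_lt.1 hp1
    have hd : HasDerivAt (fun s => p.2 + ∫ σ in (0:ℝ)..s, V (φ (σ, p.2))) (V (φ (p.1, p.2))) p.1 := by
      apply HasDerivAt.const_add
      apply intervalIntegral.integral_hasDerivAt_right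
      · apply ContinuousOn.intervalIntegrable
        apply hcont.mono
        exact (Set.ordConnected_Ioo).uIcc_subset (by constructor <;> linarith) hmem
      · exact hcont.stronglyMeasurableAtFilter isOpen_Ioo _ hmem
      · exact hcont.continuousAt (isOpen_Ioo.mem_nhds hmem)
    refine hd.congr_of_eventuallyEq ?_
    filter_upwards [isOpen_Ioo.mem_nhds hmem] with s hs
    exact (hb _ (hq s (abs_lt.2 hs))).1
  · have ht : Tendsto (fun p : ℝ × M => (p, constOp M p.2 + p.1 • rampOp w)) (𝓝 ((0:ℝ), y0))
        (𝓝 (((0:ℝ), y0), constOp M y0)) := by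
      have hc : Continuous (fun p : ℝ × M => (p, constOp M p.2 + p.1 • rampOp w)) :=
        continuous_id.prodMk (((constOp M).continuous.comp continuous_snd).add
          (continuous_fst.smul continuous_const))
      have := hc.tendsto ((0:ℝ), y0)
      simpa using this
    filter_upwards [ht.eventually huniq] with p hp h
    have h1 := hp ?_
    · change Γ p 1 = _
      change Γ p = _ at h1
      rw [h1]
      simp [constOp_apply, rampOp]
    · ext s
      simp only [ContinuousMap.sub_apply, ContinuousMap.add_apply, ContinuousMap.smul_apply,
        intOp_apply, constOp_apply]
      rw [show rampOp w s = (s:ℝ) • w from rfl]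
      have : ∫ τ in (0:ℝ)..s, extI (nemOp V hV.continuous (constOp M p.2 + p.1 • rampOp w)) τ
          = ∫ τ in (0:ℝ)..s, w := by
        apply intervalIntegral.integral_congr
        intro x hx
        rw [Set.uIcc_of_le s.2.1] at hx
        have hx' : x ∈ Set.Icc (0:ℝ) 1 := ⟨hx.1, hx.2.trans s.2.2⟩
        simp only
        rw [extI_of_mem _ hx']
        change V (p.2 + p.1 • x • w) = w
        rw [smul_smul]
        apply h
        rw [abs_mul]
        exact mul_le_of_le_one_right (abs_nonneg _) (by rw [abs_of_nonneg hx'.1]; exact hx'.2)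
      rw [this]
      simp
end flow

end Part3

section Part4

section forms
variable {X Y : Type} [NormedAddCommGroup X] [NormedSpace ℝ X]
  [NormedAddCommGroup Y] [NormedSpace ℝ Y]

def ClosedAt (α : X → X →L[ℝ] X →L[ℝ] ℝ) (p : X) : Prop :=
  ∀ u v w, fderiv ℝ α p u v w - fderiv ℝ α p v u w + fderiv ℝ α p w u v = 0

def SkewF (α : X → X →L[ℝ] X →L[ℝ] ℝ) : Prop := ∀ p u v, α p u v = - α p v u

def pbk (H : X → Y) (α : Y → Y →L[ℝ] Y →L[ℝ] ℝ) : X → X →L[ℝ] X →L[ℝ] ℝ :=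
  fun p => (α (H p)).bilinearComp (fderiv ℝ H p) (fderiv ℝ H p)

lemma pbk_apply (H : X → Y) (α : Y → Y →L[ℝ] Y →L[ℝ] ℝ) (p u v : X) :
    pbk H α p u v = α (H p) (fderiv ℝ H p u) (fderiv ℝ H p v) := rfl

lemma pbk_skew (H : X → Y) {α : Y → Y →L[ℝ] Y →L[ℝ] ℝ} (h : SkewF α) : SkewF (pbk H α) :=
  fun p _ _ => h (H p) _ _

lemma pbk_contDiffOn [FiniteDimensional ℝ X] {H : X → Y} {α : Y → Y →L[ℝ] Y →L[ℝ] ℝ}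
    {U : Set X} (hU : IsOpen U)
    (hH : ContDiffOn ℝ (⊤ : ℕ∞) H U) (hα : ContDiff ℝ (⊤ : ℕ∞) α) :
    ContDiffOn ℝ (⊤ : ℕ∞) (pbk H α) U := by
  have h0 : ContDiffOn ℝ (⊤ : ℕ∞) (fderiv ℝ H) U := hH.fderiv_of_isOpen hU (by simp)
  rw [contDiffOn_clm_apply]
  intro u
  rw [contDiffOn_clm_apply]
  intro v
  simp only [pbk_apply]
  exact ((hα.comp_contDiffOn hH).clm_apply (h0.clm_apply contDiffOn_const)).clm_apply
    (h0.clm_apply contDiffOn_const)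

lemma pbk_contDiff [FiniteDimensional ℝ X] {H : X → Y} {α : Y → Y →L[ℝ] Y →L[ℝ] ℝ}
    (hH : ContDiff ℝ (⊤ : ℕ∞) H) (hα : ContDiff ℝ (⊤ : ℕ∞) α) :
    ContDiff ℝ (⊤ : ℕ∞) (pbk H α) :=
  contDiffOn_univ.1 (pbk_contDiffOn isOpen_univ hH.contDiffOn hα)

lemma fderiv_apply2 {Z : Type} [NormedAddCommGroup Z] [NormedSpace ℝ Z]
    {α : X → Y →L[ℝ] Z →L[ℝ] ℝ} {p : X} (h : DifferentiableAt ℝ α p)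
    (u : X) (v : Y) (w : Z) : fderiv ℝ (fun q => α q v w) p u = fderiv ℝ α p u v w := by
  have h1 := (h.hasFDerivAt.clm_apply (hasFDerivAt_const v p)).clm_apply (hasFDerivAt_const w p)
  rw [h1.fderiv]
  simp

lemma pbk_fderiv [FiniteDimensional ℝ X] {H : X → Y} {α : Y → Y →L[ℝ] Y →L[ℝ] ℝ} {p : X}
    (hH : ContDiffAt ℝ 2 H p) (hα : DifferentiableAt ℝ α (H p)) (u v w : X) :
    fderiv ℝ (fun q => pbk H α q v w) p u =
      fderiv ℝ α (H p) (fderiv ℝ H p u) (fderiv ℝ H p v) (fderiv ℝ H p w)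
      + α (H p) (fderiv ℝ (fderiv ℝ H) p u v) (fderiv ℝ H p w)
      + α (H p) (fderiv ℝ H p v) (fderiv ℝ (fderiv ℝ H) p u w) := by
  have h1 : HasFDerivAt H (fderiv ℝ H p) p := (hH.differentiableAt (by norm_num)).hasFDerivAt
  have h2 : HasFDerivAt (fderiv ℝ H) (fderiv ℝ (fderiv ℝ H) p) p :=
    ((hH.fderiv_right (m := 1) (by norm_num)).differentiableAt (by norm_num)).hasFDerivAt
  have h3 : HasFDerivAt (α ∘ H) ((fderiv ℝ α (H p)).comp (fderiv ℝ H p)) p :=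
    HasFDerivAt.comp (g := α) (f := H) p hα.hasFDerivAt h1
  have h4 := (h3.clm_apply (h2.clm_apply (hasFDerivAt_const v p))).clm_apply
    (h2.clm_apply (hasFDerivAt_const w p))
  have h5 : (fun q => pbk H α q v w) = (fun y => ((α ∘ H) y) (fderiv ℝ H y v) (fderiv ℝ H y w)) := rfl
  rw [h5, h4.fderiv]
  simp
  ring

lemma pbk_closed [FiniteDimensional ℝ X] {H : X → Y} {α : Y → Y →L[ℝ] Y →L[ℝ] ℝ} {p : X}
    (hH : ContDiffAt ℝ 2 H p) (hα : DifferentiableAt ℝ α (H p)) (hs : SkewF α)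
    (hc : ClosedAt α (H p)) (hd : DifferentiableAt ℝ (pbk H α) p) : ClosedAt (pbk H α) p := by
  intro u v w
  have hsym : ∀ a b, fderiv ℝ (fderiv ℝ H) p a b = fderiv ℝ (fderiv ℝ H) p b a :=
    fun a b => (hH.isSymmSndFDerivAt (by simp)) a b
  rw [← fderiv_apply2 hd, ← fderiv_apply2 hd, ← fderiv_apply2 hd, pbk_fderiv hH hα,
    pbk_fderiv hH hα, pbk_fderiv hH hα]
  have := hc (fderiv ℝ H p u) (fderiv ℝ H p v) (fderiv ℝ H p w)
  rw [hsym v u, hsym w u, hsym w v, hs (H p) (fderiv ℝ H p u) (fderiv ℝ (fderiv ℝ H) p v w),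
    hs (H p) (fderiv ℝ H p v) (fderiv ℝ (fderiv ℝ H) p u w)]
  linarith
end forms

section homotopy
variable {E : Type} [NormedAddCommGroup E] [NormedSpace ℝ E] [FiniteDimensional ℝ E]

lemma homotopy_formula (H : ℝ × E → E) (hH : ContDiff ℝ (⊤ : ℕ∞) H)
    (α : E → E →L[ℝ] E →L[ℝ] ℝ) (hα : ContDiff ℝ (⊤ : ℕ∞) α) (hs : SkewF α) :
    ∃ κ : E → E →L[ℝ] ℝ, ContDiff ℝ (⊤ : ℕ∞) κ ∧
      (∀ x, (∀ t ∈ Set.Icc (0:ℝ) 1, ClosedAt α (H (t, x))) → ∀ u v,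
        fderiv ℝ κ x u v - fderiv ℝ κ x v u =
          α (H (1, x)) (fderiv ℝ H (1, x) (0, u)) (fderiv ℝ H (1, x) (0, v))
          - α (H (0, x)) (fderiv ℝ H (0, x) (0, u)) (fderiv ℝ H (0, x) (0, v))) ∧
      (∀ x, (∀ t ∈ Set.Icc (0:ℝ) 1, ∀ u,
        α (H (t, x)) (fderiv ℝ H (t, x) (1, 0)) (fderiv ℝ H (t, x) (0, u)) = 0) → κ x = 0) := by
  set Ξ := pbk H α with hΞ
  have hΞc : ContDiff ℝ (⊤ : ℕ∞) Ξ := pbk_contDiff hH hα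
  have hΞd : Differentiable ℝ Ξ := hΞc.differentiable (by simp)
  let k : ℝ × E → E →L[ℝ] ℝ := fun p => (Ξ p (1, 0)).comp (ContinuousLinearMap.inr ℝ ℝ E)
  have hk : ContDiff ℝ (⊤ : ℕ∞) k := (hΞc.clm_apply contDiff_const).clm_comp contDiff_const
  have hkd : Differentiable ℝ k := hk.differentiable (by simp)
  have hkf : ∀ p (a : ℝ × E) (v : E), fderiv ℝ k p a v = fderiv ℝ Ξ p a (1, 0) (0, v) := by
    intro p a v
    rw [← fderiv_apply2 (hΞd p)]
    have h1 := (hkd p).hasFDerivAt.clm_apply (hasFDerivAt_const v p)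
    have h2 : (fun q => Ξ q (1, 0) (0, v)) = fun q => k q v := rfl
    rw [h2, h1.fderiv]; simp
  have hcont : ∀ x u v, Continuous (fun t : ℝ => fderiv ℝ k (t, x) (0, u) v) := by
    intro x u v
    have := hk.continuous_fderiv (by simp)
    fun_prop
  have hcontk : ∀ x u, Continuous (fun t : ℝ => fderiv ℝ k (t, x) (0, u)) := by
    intro x u
    have := hk.continuous_fderiv (by simp)
    fun_prop
  refine ⟨fun x => ∫ t in (0:ℝ)..1, k (t, x), param_int_contDiff k hk, ?_, ?_⟩
  · intro x hcl u v
    rw [param_int_fderiv k hk, param_int_fderiv k hk,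
      ContinuousLinearMap.intervalIntegral_apply ((hcontk x u).intervalIntegrable _ _),
      ContinuousLinearMap.intervalIntegral_apply ((hcontk x v).intervalIntegrable _ _),
      ← intervalIntegral.integral_sub ((hcont x u v).intervalIntegrable _ _)
        ((hcont x v u).intervalIntegrable _ _)]
    have hF := intervalIntegral.integral_eq_sub_of_hasDerivAt (a := (0:ℝ)) (b := 1)
      (f := fun t => Ξ (t, x) (0, u) (0, v))
      (f' := fun t => fderiv ℝ k (t, x) (0, u) v - fderiv ℝ k (t, x) (0, v) u) ?_
      (((hcont x u v).sub (hcont x v u)).intervalIntegrable _ _)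
    · exact hF
    · intro t ht
      rw [Set.uIcc_of_le zero_le_one] at ht
      have hc : ClosedAt Ξ (t, x) := pbk_closed ((contDiff_infty.1 hH 2).contDiffAt)
        (hα.differentiable (by simp) _) hs (hcl t ht) (hΞd _)
      have h3 := hc (1, 0) (0, u) (0, v)
      rw [hkf, hkf]
      have h4 : HasDerivAt (fun t : ℝ => (t, x)) ((1:ℝ), (0:E)) t :=
        (hasDerivAt_id t).prodMk (hasDerivAt_const t x)
      have h5 : HasFDerivAt (fun q => Ξ q (0, u) (0, v))
          (fderiv ℝ (fun q => Ξ q (0, u) (0, v)) (t, x)) (t, x) :=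
        (((hΞd (t,x)).clm_apply (differentiableAt_const _)).clm_apply
          (differentiableAt_const _)).hasFDerivAt
      have h6 := h5.comp_hasDerivAt t h4
      rw [fderiv_apply2 (hΞd _)] at h6
      convert! h6 using 1
      linarith
  · intro x hx
    have : ∫ t in (0:ℝ)..1, k (t, x) = ∫ t in (0:ℝ)..1, (0 : E →L[ℝ] ℝ) := by
      apply intervalIntegral.integral_congr
      intro t ht
      rw [Set.uIcc_of_le zero_le_one] at ht
      ext u
      exact hx t ht u
    simp only [this]
    simp
end homotopy

end Part4

section Part5

section jet

lemma poly_coeff_zero (d : ℕ) : ∀ (p : Polynomial ℝ) (h : ℝ → ℝ), Continuous h →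
    (∀ᶠ s in 𝓝 (0:ℝ), p.eval s + s ^ d * h s = 0) → ∀ e < d, p.coeff e = 0 := by
  induction d with
  | zero => intro p h _ _ e he; omega
  | succ d ih =>
    intro p h hh hp e he
    have h0 : p.coeff 0 = 0 := by
      have := hp.self_of_nhds
      rw [Polynomial.coeff_zero_eq_eval_zero]
      simpa using this
    have hpx : p = Polynomial.X * p.divX := by
      conv_lhs => rw [← Polynomial.X_mul_divX_add p, h0]
      simp
    cases e with
    | zero => exact h0
    | succ e =>
      have key : ∀ᶠ s in 𝓝 (0:ℝ), p.divX.eval s + s ^ d * h s = 0 := by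
        have h1 : ∀ᶠ s in 𝓝[≠] (0:ℝ), p.divX.eval s + s ^ d * h s = 0 := by
          filter_upwards [hp.filter_mono nhdsWithin_le_nhds, self_mem_nhdsWithin] with s hs hs0
          rw [hpx] at hs
          simp only [Polynomial.eval_mul, Polynomial.eval_X] at hs
          have : s * (p.divX.eval s + s ^ d * h s) = 0 := by rw [← hs]; ring
          exact (mul_eq_zero.1 this).resolve_left hs0
        have hc : Continuous (fun s => p.divX.eval s + s ^ d * h s) := by fun_prop
        have h2 : p.divX.eval 0 + 0 ^ d * h 0 = 0 := by
          have t1 : Tendsto (fun s => p.divX.eval s + s ^ d * h s) (𝓝[≠] 0)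
              (𝓝 (p.divX.eval 0 + 0 ^ d * h 0)) := (hc.tendsto 0).mono_left nhdsWithin_le_nhds
          have t2 : Tendsto (fun s => p.divX.eval s + s ^ d * h s) (𝓝[≠] 0) (𝓝 0) :=
            tendsto_const_nhds.congr' (h1.mono fun s hs => hs.symm)
          exact tendsto_nhds_unique t1 t2
        rw [eventually_nhdsWithin_iff] at h1
        filter_upwards [h1] with s hs
        by_cases hs0 : s = 0
        · subst hs0; exact h2
        · exact hs hs0
      have := ih p.divX h hh key e (by omega)
      rwa [Polynomial.coeff_divX] at this

lemma hadamard {m : ℕ} (G : (Fin m → ℝ) → ℝ) (hG : ContDiff ℝ (⊤ : ℕ∞) G) :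
    ∃ Gi : Fin m → (Fin m → ℝ) → ℝ, (∀ i, ContDiff ℝ (⊤ : ℕ∞) (Gi i)) ∧
      (∀ y, G y = G 0 + ∑ i, y i * Gi i y) ∧ ∀ i, Gi i 0 = fderiv ℝ G 0 (Pi.single i 1) := by
  have hG' : ContDiff ℝ (⊤ : ℕ∞) (fderiv ℝ G) := hG.fderiv_right (by simp)
  have hk : ∀ i : Fin m, ContDiff ℝ (⊤ : ℕ∞) (fun p : ℝ × (Fin m → ℝ) =>
      fderiv ℝ G (p.1 • p.2) (Pi.single i 1)) := fun i =>
    (hG'.comp (contDiff_fst.smul contDiff_snd)).clm_apply contDiff_const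
  refine ⟨fun i y => ∫ t in (0:ℝ)..1, fderiv ℝ G (t • y) (Pi.single i 1),
    fun i => param_int_contDiff _ (hk i), ?_, ?_⟩
  · intro y
    have hcont : ∀ v, Continuous (fun t : ℝ => fderiv ℝ G (t • y) v) := by
      intro v
      have := hG'.continuous
      fun_prop
    have h1 := intervalIntegral.integral_eq_sub_of_hasDerivAt (a := (0:ℝ)) (b := 1)
      (f := fun t : ℝ => G (t • y)) (f' := fun t => fderiv ℝ G (t • y) y)
      (fun t _ => by
        have h2 : HasDerivAt (fun t : ℝ => t • y) y t := by
          simpa using (hasDerivAt_id t).smul_const y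
        exact ((hG.differentiable (by simp) (t • y)).hasFDerivAt.comp_hasDerivAt t h2))
      ((hcont y).intervalIntegrable _ _)
    simp only [one_smul, zero_smul] at h1
    have h3 : ∀ t : ℝ, fderiv ℝ G (t • y) y =
        ∑ i, y i * fderiv ℝ G (t • y) (Pi.single i 1) := by
      intro t
      refine (congrArg (fderiv ℝ G (t • y)) (pi_eq_sum_univ' y)).trans ?_
      rw [map_sum]
      refine Finset.sum_congr rfl fun i _ => ?_
      rw [map_smul, smul_eq_mul]
    simp only [h3] at h1
    rw [intervalIntegral.integral_finsetSum] at h1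
    · simp only [intervalIntegral.integral_const_mul] at h1
      linarith
    · intro i _
      exact ((hcont _).const_mul _).intervalIntegrable _ _
  · intro i
    simp

variable {m : ℕ} (K : Fin m → Prop) [DecidablePred K] (μ : Fin m → ℕ)

def monoC (s : ℝ) : Fin m → ℝ := fun i => if K i then s ^ μ i else 0

lemma monoC_continuous : Continuous (monoC K μ) := by
  refine continuous_pi fun i => ?_
  unfold monoC
  split_ifs <;> fun_prop

lemma monoC_contDiff : ContDiff ℝ (⊤ : ℕ∞) (monoC K μ) := by
  refine contDiff_pi.2 fun i => ?_
  unfold monoC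
  split_ifs <;> fun_prop

def expS : AddSubmonoid ℕ := AddSubmonoid.closure {e | ∃ i, K i ∧ μ i = e}

lemma jet_expand (hμ : ∀ i, K i → 0 < μ i) (d : ℕ) : ∀ (G : (Fin m → ℝ) → ℝ),
    ContDiff ℝ (⊤ : ℕ∞) G → ∃ (p : Polynomial ℝ) (h : ℝ → ℝ), Continuous h ∧
      p.coeff 0 = G 0 ∧ (∀ e, p.coeff e ≠ 0 → e ∈ expS K μ) ∧
      ∀ s, G (monoC K μ s) = p.eval s + s ^ d * h s := by
  induction d with
  | zero =>
    intro G hG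
    refine ⟨Polynomial.C (G 0), fun s => G (monoC K μ s) - G 0, ?_, by simp, ?_, by simp⟩
    · exact (hG.continuous.comp (monoC_continuous K μ)).sub continuous_const
    · intro e he
      rw [Polynomial.coeff_C] at he
      split_ifs at he with h0
      · rw [h0]; exact zero_mem _
      · exact absurd rfl he
  | succ d ih =>
    intro G hG
    obtain ⟨Gi, hGi, hGe, -⟩ := hadamard G hG
    choose p h hh hp0 hpS hpe using fun i => ih (Gi i) (hGi i)
    refine ⟨Polynomial.C (G 0) + ∑ i, if K i then Polynomial.X ^ μ i * p i else 0,
      fun s => ∑ i, if K i then s ^ (μ i - 1) * h i s else 0, ?_, ?_, ?_, ?_⟩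
    · refine continuous_finsetSum _ fun i _ => ?_
      split_ifs
      · have := hh i; fun_prop
      · fun_prop
    · rw [Polynomial.coeff_add, Polynomial.finsetSum_coeff, Finset.sum_eq_zero]
      · simp
      · intro i _
        split_ifs with hi
        · rw [Polynomial.coeff_X_pow_mul', if_neg]
          have := hμ i hi; omega
        · simp
    · intro e he
      by_contra hne
      apply he
      rw [Polynomial.coeff_add, Polynomial.finsetSum_coeff, Finset.sum_eq_zero]
      · rw [Polynomial.coeff_C, if_neg, add_zero]
        rintro rfl
        exact hne (zero_mem _)
      · intro i _
        split_ifs with hi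
        · rw [Polynomial.coeff_X_pow_mul']
          split_ifs with hle
          · by_contra hc
            apply hne
            have h1 := hpS i _ hc
            have h2 : μ i ∈ expS K μ := AddSubmonoid.subset_closure ⟨i, hi, rfl⟩
            have := add_mem h2 h1
            rwa [Nat.add_sub_cancel' hle] at this
          · rfl
        · simp
    · intro s
      rw [hGe, Polynomial.eval_add, Polynomial.eval_C, Polynomial.eval_finsetSum,
        Finset.mul_sum, add_assoc, ← Finset.sum_add_distrib]
      congr 1
      refine Finset.sum_congr rfl fun i _ => ?_
      unfold monoC at hpe ⊢
      by_cases hi : K i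
      · simp only [if_pos hi]
        rw [hpe i s]
        simp only [Polynomial.eval_mul, Polynomial.eval_pow, Polynomial.eval_X]
        obtain ⟨q, hq⟩ : ∃ q, μ i = q + 1 := ⟨μ i - 1, by have := hμ i hi; omega⟩
        rw [hq]
        simp
        ring
      · simp [hi]

lemma jet_lemma (hμ : ∀ i, K i → 0 < μ i)
    (hS : ∀ i j, K i → K j → i ≠ j → ∀ s ∈ expS K μ, μ j ≠ μ i + s)
    (G : (Fin m → ℝ) → ℝ) (hG : ContDiff ℝ (⊤ : ℕ∞) G)
    (h0 : ∀ᶠ s in 𝓝 (0:ℝ), G (monoC K μ s) = 0) (j : Fin m) (hj : K j) :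
    fderiv ℝ G 0 (Pi.single j 1) = 0 := by
  obtain ⟨Gi, hGi, hGe, hGd⟩ := hadamard G hG
  rw [← hGd]
  choose p h hh hp0 hpS hpe using fun i => jet_expand K μ hμ (μ j + 1) (Gi i) (hGi i)
  have hG0 : G 0 = 0 := by
    have := h0.self_of_nhds
    have h2 : monoC K μ 0 = 0 := by
      ext i
      unfold monoC
      split_ifs with hi
      · simp [(hμ i hi).ne']
      · rfl
    rwa [h2] at this
  have key := poly_coeff_zero (μ j + 1) (∑ i, if K i then Polynomial.X ^ μ i * p i else 0)
    (fun s => ∑ i, if K i then s ^ (μ i) * h i s else 0) ?_ ?_ (μ j) (by omega)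
  · rw [Polynomial.finsetSum_coeff, Finset.sum_eq_single j] at key
    · rw [if_pos hj, Polynomial.coeff_X_pow_mul', if_pos le_rfl, Nat.sub_self, hp0] at key
      exact key
    · intro i _ hij
      split_ifs with hi
      · rw [Polynomial.coeff_X_pow_mul']
        split_ifs with hle
        · by_contra hc
          exact hS i j hi hj hij _ (hpS i _ hc) (by omega)
        · rfl
      · simp
    · simp
  · refine continuous_finsetSum _ fun i _ => ?_
    split_ifs
    · have := hh i; fun_prop
    · fun_prop
  · filter_upwards [h0] with s hs
    rw [hGe, hG0, zero_add] at hs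
    refine Eq.trans ?_ hs
    rw [Polynomial.eval_finsetSum, Finset.mul_sum, ← Finset.sum_add_distrib]
    refine Finset.sum_congr rfl fun i _ => ?_
    rw [hpe i s]
    unfold monoC
    by_cases hi : K i
    · simp [hi]
      ring
    · simp [hi]

lemma expS_indep (hμ : ∀ i, K i → 0 < μ i)
    (hS : ∀ j, K j → ∀ c : Fin m → ℕ, μ j ≠ ∑ i ∈ (Finset.univ.filter K).erase j, c i * μ i)
    (i j : Fin m) (hi : K i) (hj : K j) (hij : i ≠ j) (s : ℕ) (hs : s ∈ expS K μ) :
    μ j ≠ μ i + s := by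
  have hrep : ∃ c : Fin m → ℕ, s = ∑ i ∈ Finset.univ.filter K, c i * μ i := by
    refine AddSubmonoid.closure_induction ?_ ?_ ?_ hs
    · rintro _ ⟨l, hl, rfl⟩
      refine ⟨Pi.single l 1, ?_⟩
      rw [Finset.sum_eq_single l]
      · simp
      · intro b _ hb; simp [hb]
      · intro h; simp [hl] at h
    · exact ⟨0, by simp⟩
    · rintro x y _ _ ⟨c, hc⟩ ⟨c', hc'⟩
      exact ⟨c + c', by rw [hc, hc', ← Finset.sum_add_distrib]; simp [add_mul]⟩
  obtain ⟨c, hc⟩ := hrep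
  intro he
  have hjm : j ∈ Finset.univ.filter K := by simp [hj]
  rw [← Finset.add_sum_erase _ _ hjm] at hc
  have hi0 := hμ i hi
  have hcj : c j = 0 := by
    by_contra h
    have : μ j ≤ c j * μ j := Nat.le_mul_of_pos_left _ (Nat.pos_of_ne_zero h)
    omega
  refine hS j hj (c + Pi.single i 1) ?_
  have hie : i ∈ (Finset.univ.filter K).erase j := by simp [hi, hij]
  have : ∑ l ∈ (Finset.univ.filter K).erase j, (c + Pi.single i 1 : Fin m → ℕ) l * μ l
      = ∑ l ∈ (Finset.univ.filter K).erase j, c l * μ l + μ i := by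
    simp only [Pi.add_apply, add_mul, Finset.sum_add_distrib]
    congr 1
    rw [Finset.sum_eq_single i]
    · simp
    · intro b _ hb; simp [hb]
    · intro h; exact absurd hie h
  rw [this, he, hc, hcj]
  ring
end jet

end Part5

section Part6

section witt
variable {V : Type} [AddCommGroup V] [Module ℝ V] [FiniteDimensional ℝ V]

lemma nondeg_of (A : LinearMap.BilinForm ℝ V) (hA : ∀ u v, A u v = - A v u)
    (nA : ∀ u, (∀ v, A u v = 0) → u = 0) : A.Nondegenerate :=
  ⟨fun u h => nA u h, fun u h => nA u fun v => by rw [hA, h v, neg_zero]⟩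

lemma witt_step (A B : LinearMap.BilinForm ℝ V)
    (hA : ∀ u v, A u v = - A v u) (hB : ∀ u v, B u v = - B v u)
    (nA : ∀ u, (∀ v, A u v = 0) → u = 0) (nB : ∀ u, (∀ v, B u v = 0) → u = 0)
    (W : Submodule ℝ V) (L : V →ₗ[ℝ] V) (hinj : ∀ w ∈ W, L w = 0 → w = 0)
    (hiso : ∀ w ∈ W, ∀ w' ∈ W, B (L w) (L w') = A w w') (v : V) (hv : v ∉ W) :
    ∃ v', v' ∉ W.map L ∧ ∀ w ∈ W, B v' (L w) = A v w := by
  have NA := nondeg_of A hA nA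
  have NB := nondeg_of B hB nB
  have hLinj : Function.Injective (L.domRestrict W) := by
    rw [← LinearMap.ker_eq_bot, LinearMap.ker_eq_bot']
    rintro ⟨w, hw⟩ h
    exact Subtype.ext (hinj w hw h)
  obtain ⟨g, hg⟩ := LinearMap.exists_leftInverse_of_injective _ (LinearMap.ker_eq_bot.2 hLinj)
  have hg' : ∀ w (hw : w ∈ W), g (L w) = ⟨w, hw⟩ := fun w hw =>
    LinearMap.congr_fun hg ⟨w, hw⟩
  let ℓ : Module.Dual ℝ V := ((A v).comp W.subtype).comp g
  obtain ⟨v0, hv0⟩ := (B.toDual NB).surjective ℓ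
  have hv0' : ∀ w ∈ W, B v0 (L w) = A v w := by
    intro w hw
    have h1 := LinearMap.congr_fun hv0 (L w)
    rw [LinearMap.BilinForm.toDual_def] at h1
    rw [h1]
    simp only [ℓ, LinearMap.comp_apply]
    rw [hg' w hw]; rfl
  by_cases hm : v0 ∈ W.map L
  swap
  · exact ⟨v0, hm, hv0'⟩
  obtain ⟨w0, hw0, rfl⟩ := hm
  have hex : ∃ u ∈ B.orthogonal (W.map L), u ∉ W.map L := by
    by_contra hcon
    push Not at hcon
    have h1 : B.orthogonal (W.map L) ≤ (W ⊓ A.orthogonal W).map L := by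
      intro u hu
      obtain ⟨w, hw, rfl⟩ := hcon u hu
      refine ⟨w, ⟨hw, ?_⟩, rfl⟩
      rw [LinearMap.BilinForm.mem_orthogonal_iff] at hu
      refine LinearMap.BilinForm.mem_orthogonal_iff.2 ?_
      intro w' hw'
      rw [← hiso w' hw' w hw]
      exact hu _ ⟨w', hw', rfl⟩
    have h2 : W ⊓ A.orthogonal W < A.orthogonal W := by
      refine lt_of_le_of_ne inf_le_right fun he => ?_
      have h3 : v - w0 ∈ A.orthogonal W := by
        rw [LinearMap.BilinForm.mem_orthogonal_iff]
        intro w hw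
        rw [map_sub, hA w v, hA w w0, ← hv0' w hw, hiso w0 hw0 w hw]
        ring
      rw [← he] at h3
      have := W.add_mem h3.1 hw0
      simp at this
      exact hv this
    have h4 := Submodule.finrank_mono h1
    have h5 := Submodule.finrank_map_le L (W ⊓ A.orthogonal W)
    have h6 := Submodule.finrank_lt_finrank_of_lt h2
    rw [LinearMap.BilinForm.finrank_orthogonal NB] at h4
    rw [LinearMap.BilinForm.finrank_orthogonal NA] at h6
    have h7 : Module.finrank ℝ (W.map L) = Module.finrank ℝ W := by
      have := LinearMap.finrank_range_of_inj hLinj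
      rwa [LinearMap.range_domRestrict] at this
    omega
  obtain ⟨u, hu, hu'⟩ := hex
  refine ⟨L w0 + u, ?_, ?_⟩
  · intro h
    apply hu'
    have := (W.map L).sub_mem h (Submodule.mem_map_of_mem hw0)
    simpa using this
  · intro w hw
    rw [map_add, LinearMap.add_apply, hv0' w hw, hB u,
      (LinearMap.BilinForm.mem_orthogonal_iff.1 hu) (L w) ⟨w, hw, rfl⟩]
    simp

lemma witt_aux (A B : LinearMap.BilinForm ℝ V)
    (hA : ∀ u v, A u v = - A v u) (hB : ∀ u v, B u v = - B v u)
    (nA : ∀ u, (∀ v, A u v = 0) → u = 0) (nB : ∀ u, (∀ v, B u v = 0) → u = 0) (d : ℕ) :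
    ∀ (W : Submodule ℝ V) (L : V →ₗ[ℝ] V), Module.finrank ℝ V = Module.finrank ℝ W + d →
    (∀ w ∈ W, L w = 0 → w = 0) →
    (∀ w ∈ W, ∀ w' ∈ W, B (L w) (L w') = A w w') →
    ∃ L' : V →ₗ[ℝ] V, (∀ w ∈ W, L' w = L w) ∧ ∀ u v, B (L' u) (L' v) = A u v := by
  induction d with
  | zero =>
    intro W L hd _ hiso
    have : W = ⊤ := Submodule.eq_top_of_finrank_eq (by omega)
    subst this
    exact ⟨L, fun _ _ => rfl, fun u v => hiso u trivial v trivial⟩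
  | succ d ih =>
    intro W L hd hinj hiso
    have hne : ∃ v, v ∉ W := by
      by_contra hcon
      push Not at hcon
      have : W = ⊤ := (Submodule.eq_top_iff').2 hcon
      rw [this, finrank_top] at hd
      omega
    obtain ⟨v, hv⟩ := hne
    obtain ⟨v', hv', hv'A⟩ := witt_step A B hA hB nA nB W L hinj hiso v hv
    obtain ⟨f, hfv, hfW⟩ := Submodule.exists_le_ker_of_notMem hv
    have hfW' : ∀ w ∈ W, f w = 0 := fun w hw => hfW hw
    let L' : V →ₗ[ℝ] V := L + ((f v)⁻¹ • f).smulRight (v' - L v)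
    have hL'W : ∀ w ∈ W, L' w = L w := by
      intro w hw; simp [L', hfW' w hw]
    have hL'v : L' v = v' := by
      simp [L', hfv]
    let W' := W ⊔ Submodule.span ℝ {v}
    have hmem : ∀ x ∈ W', ∃ w ∈ W, ∃ a : ℝ, x = w + a • v := by
      intro x hx
      obtain ⟨w, hw, y, hy, rfl⟩ := Submodule.mem_sup.1 hx
      obtain ⟨a, rfl⟩ := Submodule.mem_span_singleton.1 hy
      exact ⟨w, hw, a, rfl⟩
    have hrank : Module.finrank ℝ W' = Module.finrank ℝ W + 1 := by
      have h1 := Submodule.finrank_sup_add_finrank_inf_eq W (Submodule.span ℝ {v})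
      have hv0 : v ≠ 0 := by rintro rfl; exact hv (zero_mem _)
      have h2 : W ⊓ Submodule.span ℝ {v} = ⊥ := by
        rw [eq_bot_iff]
        rintro x ⟨hx, hx'⟩
        obtain ⟨a, rfl⟩ := Submodule.mem_span_singleton.1 hx'
        by_cases ha : a = 0
        · simp [ha]
        · exact absurd ((W.smul_mem_iff ha).1 hx) hv
      rw [h2, finrank_bot, finrank_span_singleton hv0] at h1
      simpa [W'] using h1
    have hv'' : ∀ w ∈ W, ∀ a : ℝ, L w + a • v' = 0 → a = 0 := by
      intro w hw a h
      by_contra ha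
      apply hv'
      refine (Submodule.smul_mem_iff (W.map L) ha).1 ?_
      rw [show a • v' = L (-w) by rw [map_neg]; exact eq_neg_of_add_eq_zero_right h]
      exact Submodule.mem_map_of_mem (W.neg_mem hw)
    have g1 : ∀ w ∈ W', L' w = 0 → w = 0 := by
      intro x hx h
      obtain ⟨w, hw, a, rfl⟩ := hmem x hx
      rw [map_add, map_smul, hL'W w hw, hL'v] at h
      have ha := hv'' w hw a h
      subst ha
      simp at h ⊢
      exact hinj w hw h
    have g2 : ∀ w ∈ W', ∀ w' ∈ W', B (L' w) (L' w') = A w w' := by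
      intro x hx y hy
      obtain ⟨w, hw, a, rfl⟩ := hmem x hx
      obtain ⟨w', hw', a', rfl⟩ := hmem y hy
      simp only [map_add, map_smul, hL'W w hw, hL'W w' hw', hL'v, LinearMap.add_apply,
        LinearMap.smul_apply, smul_eq_mul]
      have e1 : B v' v' = 0 := by have := hB v' v'; linarith
      have e2 : A v v = 0 := by have := hA v v; linarith
      rw [hiso w hw w' hw', hB (L w) v', hv'A w hw, hv'A w' hw', hA w v, e1, e2]
    obtain ⟨L'', h1, h2⟩ := ih W' L' (by omega) g1 g2
    refine ⟨L'', fun w hw => ?_, h2⟩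
    rw [h1 w (Submodule.mem_sup_left hw), hL'W w hw]

lemma witt (A B : LinearMap.BilinForm ℝ V)
    (hA : ∀ u v, A u v = - A v u) (hB : ∀ u v, B u v = - B v u)
    (nA : ∀ u, (∀ v, A u v = 0) → u = 0) (nB : ∀ u, (∀ v, B u v = 0) → u = 0)
    (W : Submodule ℝ V) (hW : ∀ w ∈ W, ∀ w' ∈ W, B w w' = A w w') :
    ∃ L' : V →ₗ[ℝ] V, (∀ w ∈ W, L' w = w) ∧ ∀ u v, B (L' u) (L' v) = A u v := by
  have := Submodule.finrank_le W
  exact witt_aux A B hA hB nA nB (Module.finrank ℝ V - Module.finrank ℝ W) W LinearMap.id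
    (by omega) (fun w _ h => h) hW
end witt

end Part6

section Part7

lemma globalize {M F : Type} [NormedAddCommGroup M] [NormedSpace ℝ M] [FiniteDimensional ℝ M]
    [NormedAddCommGroup F] [NormedSpace ℝ F] (f : M → F) (p : M)
    (hf : ∃ U ∈ 𝓝 p, ContDiffOn ℝ (⊤ : ℕ∞) f U) :
    ∃ g : M → F, ContDiff ℝ (⊤ : ℕ∞) g ∧ g =ᶠ[𝓝 p] f := by
  obtain ⟨U, hU, hf⟩ := hf
  have hV : interior U ∈ 𝓝 p := interior_mem_nhds.2 hU
  have hf' : ContDiffOn ℝ (⊤ : ℕ∞) f (interior U) := hf.mono interior_subset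
  obtain ⟨r, hr, hrU⟩ := Metric.nhds_basis_closedBall.mem_iff.1 hV
  let χ : ContDiffBump p :=
    { rIn := r / 2
      rOut := r
      rIn_pos := half_pos hr
      rIn_lt_rOut := half_lt_self hr }
  refine ⟨fun x => χ x • f x, ?_, ?_⟩
  · rw [contDiff_iff_contDiffAt]
    intro x
    by_cases hx : x ∈ interior U
    · exact χ.contDiffAt.smul (hf'.contDiffAt (isOpen_interior.mem_nhds hx))
    · have hx' : x ∉ tsupport χ := by
        rw [χ.tsupport_eq]
        exact fun h => hx (hrU h)
      have : (fun x => χ x • f x) =ᶠ[𝓝 x] fun _ => 0 := by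
        have h1 : ∀ᶠ y in 𝓝 x, y ∉ tsupport χ := (isClosed_tsupport _).isOpen_compl.mem_nhds hx'
        filter_upwards [h1] with y hy
        rw [image_eq_zero_of_notMem_tsupport hy, zero_smul]
      exact contDiffAt_const.congr_of_eventuallyEq this
  · filter_upwards [χ.eventuallyEq_one] with x hx
    rw [hx]; simp

lemma const_of_deriv {F : Type} [NormedAddCommGroup F] [NormedSpace ℝ F] (f : ℝ → F) (r : ℝ)
    (h : ∀ ε, |ε| < r → HasDerivAt f 0 ε) (ε : ℝ) (hε : |ε| < r) : f ε = f 0 := by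
  have hm : ∀ x, x ∈ Metric.ball (0:ℝ) r ↔ |x| < r := by
    intro x; rw [mem_ball_zero_iff, Real.norm_eq_abs]
  have h0 : |(0:ℝ)| < r := by rw [abs_zero]; exact lt_of_le_of_lt (abs_nonneg _) hε
  exact Metric.isOpen_ball.is_const_of_deriv_eq_zero (convex_ball (0:ℝ) r).isPreconnected
    (fun x hx => (h x ((hm x).1 hx)).differentiableAt.differentiableWithinAt)
    (fun x hx => (h x ((hm x).1 hx)).deriv) ((hm ε).2 hε) ((hm 0).2 h0)

section flowpull
variable {M : Type} [NormedAddCommGroup M] [NormedSpace ℝ M] [FiniteDimensional ℝ M]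

lemma flow_pull (V : M → M) (Ω : M → M →L[ℝ] M →L[ℝ] ℝ) (hΩ : ContDiff ℝ (⊤ : ℕ∞) Ω)
    (hs : SkewF Ω) (y0 : M) (hcl : ∀ᶠ p in 𝓝 y0, ClosedAt Ω p)
    (hi : ∀ᶠ p in 𝓝 y0, ∀ v, Ω p (V p) v = 0)
    (φ : ℝ × M → M) (U : Set (ℝ × M)) (hU : U ∈ 𝓝 ((0:ℝ), y0)) (hUo : IsOpen U)
    (hφ : ContDiffOn ℝ (⊤ : ℕ∞) φ U) (hid : ∀ᶠ y in 𝓝 y0, φ (0, y) = y)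
    (hder : ∀ᶠ p in 𝓝 ((0:ℝ), y0), HasDerivAt (fun s => φ (s, p.2)) (V (φ p)) p.1) :
    ∀ᶠ q in 𝓝 ((0:ℝ), y0), ∀ u v,
      Ω (φ q) (fderiv ℝ φ q (0, u)) (fderiv ℝ φ q (0, v)) = Ω q.2 u v := by
  set Ξ := pbk φ Ω with hΞ
  have hΞc : ContDiffOn ℝ (⊤ : ℕ∞) Ξ U := pbk_contDiffOn hUo hφ hΩ
  have hφc : Tendsto φ (𝓝 ((0:ℝ), y0)) (𝓝 y0) := by
    have h1 : ContinuousAt φ ((0:ℝ), y0) := (hφ.contDiffAt hU).continuousAt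
    have h2 := h1.tendsto
    rwa [hid.self_of_nhds] at h2
  have hφd : ∀ q ∈ U, DifferentiableAt ℝ φ q := fun q hq =>
    (hφ.contDiffAt (hUo.mem_nhds hq)).differentiableAt (by simp)
  have hΞd : ∀ q ∈ U, DifferentiableAt ℝ Ξ q := fun q hq =>
    (hΞc.contDiffAt (hUo.mem_nhds hq)).differentiableAt (by simp)
  have hUe : ∀ᶠ q in 𝓝 ((0:ℝ), y0), q ∈ U := hU
  have hz : ∀ᶠ q in 𝓝 ((0:ℝ), y0), ∀ w, Ξ q (1, 0) w = 0 := by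
    filter_upwards [hder, hφc.eventually hi, hUe] with q h1 h2 h3 w
    have h4 : HasDerivAt (fun s : ℝ => (s, q.2)) ((1:ℝ), (0:M)) q.1 :=
      (hasDerivAt_id q.1).prodMk (hasDerivAt_const q.1 q.2)
    have h5 : HasDerivAt (fun s => φ (s, q.2)) (fderiv ℝ φ q (1, 0)) q.1 :=
      HasFDerivAt.comp_hasDerivAt (l := φ) q.1 (hφd q h3).hasFDerivAt h4
    rw [hΞ, pbk_apply, h5.unique h1]
    exact h2 _
  have hall : ∀ᶠ q in 𝓝 ((0:ℝ), y0), ∀ u v, fderiv ℝ Ξ q (1, 0) (0, u) (0, v) = 0 := by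
    filter_upwards [hz.eventually_nhds, hφc.eventually hcl, hUe] with q h1 h2 h3 u v
    have hc : ClosedAt Ξ q := pbk_closed
      ((hφ.contDiffAt (hUo.mem_nhds h3)).of_le (by norm_cast))
      (hΩ.differentiable (by simp) _) hs h2 (hΞd q h3)
    have hzz : ∀ a w, fderiv ℝ Ξ q a (1, 0) w = 0 := by
      intro a w
      rw [← fderiv_apply2 (hΞd q h3)]
      have : (fun q => Ξ q (1, 0) w) =ᶠ[𝓝 q] fun _ => 0 := h1.mono fun q hq => hq w
      rw [this.fderiv_eq]; simp
    have := hc (1, 0) (0, u) (0, v)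
    rw [hzz, hzz] at this
    linarith
  have hboth := hall.and hUe
  rw [nhds_prod_eq] at hboth
  obtain ⟨pa, hpa, pb, hpb, hab⟩ := eventually_prod_iff.1 hboth
  obtain ⟨r, hr, hra⟩ := Metric.eventually_nhds_iff.1 hpa
  have e1 : ∀ᶠ q in 𝓝 ((0:ℝ), y0), |q.1| < r := by
    have : Tendsto (fun q : ℝ × M => |q.1|) (𝓝 (0, y0)) (𝓝 |(0:ℝ)|) :=
      (continuous_fst.abs).tendsto _
    rw [abs_zero] at this
    exact this.eventually (gt_mem_nhds hr)
  have e2 : ∀ᶠ q : ℝ × M in 𝓝 ((0:ℝ), y0), pb q.2 ∧ ∀ᶠ y in 𝓝 q.2, φ (0, y) = y := by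
    have : Tendsto (fun q : ℝ × M => q.2) (𝓝 ((0:ℝ), y0)) (𝓝 y0) := continuous_snd.tendsto _
    exact this.eventually (hpb.and hid.eventually_nhds)
  filter_upwards [e1, e2] with q hq1 hq2 u v
  have hd : ∀ ε, |ε| < r → HasDerivAt (fun s => Ξ (s, q.2) (0, u) (0, v)) 0 ε := by
    intro ε hε
    obtain ⟨h1, h2⟩ := hab (hra (by simpa using hε)) hq2.1
    have h4 : HasDerivAt (fun s : ℝ => (s, q.2)) ((1:ℝ), (0:M)) ε :=
      (hasDerivAt_id ε).prodMk (hasDerivAt_const ε q.2)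
    have h5 : HasFDerivAt (fun p => Ξ p (0, u) (0, v))
        (fderiv ℝ (fun p => Ξ p (0, u) (0, v)) (ε, q.2)) (ε, q.2) :=
      (((hΞd _ h2).clm_apply (differentiableAt_const _)).clm_apply
        (differentiableAt_const _)).hasFDerivAt
    have h6 := HasFDerivAt.comp_hasDerivAt (l := fun p => Ξ p (0, u) (0, v)) ε h5 h4
    rw [fderiv_apply2 (hΞd _ h2), h1 u v] at h6
    exact h6
  have hc := const_of_deriv _ r hd q.1 hq1
  have hU0 : ((0:ℝ), q.2) ∈ U := (hab (hra (by simpa using hr)) hq2.1).2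
  have hD : ∀ u, fderiv ℝ φ (0, q.2) (0, u) = u := by
    intro u
    have h1 : HasFDerivAt (fun y : M => ((0:ℝ), y)) (ContinuousLinearMap.inr ℝ ℝ M) q.2 :=
      (hasFDerivAt_const (0:ℝ) q.2).prodMk (hasFDerivAt_id q.2)
    have h2 : HasFDerivAt (fun y => φ (0, y))
        ((fderiv ℝ φ (0, q.2)).comp (ContinuousLinearMap.inr ℝ ℝ M)) q.2 :=
      HasFDerivAt.comp (g := φ) q.2 (hφd _ hU0).hasFDerivAt h1
    have h3 : HasFDerivAt (fun y => φ (0, y)) (ContinuousLinearMap.id ℝ M) q.2 :=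
      (hasFDerivAt_id q.2).congr_of_eventuallyEq hq2.2
    have := congrArg (fun l : M →L[ℝ] M => l u) (h2.unique h3)
    simpa using this
  have hfin : Ξ (0, q.2) (0, u) (0, v) = Ω q.2 u v := by
    rw [hΞ, pbk_apply, hD, hD, hq2.2.self_of_nhds]
  have : Ξ q (0, u) (0, v) = Ω q.2 u v := hc.trans hfin
  exact this
end flowpull

end Part7

section Part8

set_option linter.unusedSectionVars false
section moser
variable {E : Type} [NormedAddCommGroup E] [NormedSpace ℝ E] [FiniteDimensional ℝ E]

def inter (A0 A2 : E → E →L[ℝ] E →L[ℝ] ℝ) (t : ℝ) (x : E) : E →L[ℝ] E →L[ℝ] ℝ :=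
  A0 x + t • (A2 x - A0 x)

def OmF (A0 A2 : E → E →L[ℝ] E →L[ℝ] ℝ) (η : E → E →L[ℝ] ℝ) :
    ℝ × E → (ℝ × E) →L[ℝ] (ℝ × E) →L[ℝ] ℝ := fun p =>
  (inter A0 A2 p.1 p.2).bilinearComp (ContinuousLinearMap.snd ℝ ℝ E)
      (ContinuousLinearMap.snd ℝ ℝ E)
    + (ContinuousLinearMap.fst ℝ ℝ E).smulRight
        ((η p.2).comp (ContinuousLinearMap.snd ℝ ℝ E))
    - ((ContinuousLinearMap.fst ℝ ℝ E).smulRight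
        ((η p.2).comp (ContinuousLinearMap.snd ℝ ℝ E))).flip

lemma OmF_apply (A0 A2 : E → E →L[ℝ] E →L[ℝ] ℝ) (η : E → E →L[ℝ] ℝ) (p a b : ℝ × E) :
    OmF A0 A2 η p a b = A0 p.2 a.2 b.2 + p.1 * (A2 p.2 a.2 b.2 - A0 p.2 a.2 b.2)
      + a.1 * η p.2 b.2 - b.1 * η p.2 a.2 := by
  simp [OmF, inter]

lemma OmF_skew {A0 A2 : E → E →L[ℝ] E →L[ℝ] ℝ} (η : E → E →L[ℝ] ℝ) (h0 : SkewF A0)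
    (h2 : SkewF A2) : SkewF (OmF A0 A2 η) := by
  intro p a b
  rw [OmF_apply, OmF_apply, h0 _ a.2, h2 _ a.2]; ring

lemma OmF_contDiff {A0 A2 : E → E →L[ℝ] E →L[ℝ] ℝ} {η : E → E →L[ℝ] ℝ}
    (h0 : ContDiff ℝ (⊤ : ℕ∞) A0) (h2 : ContDiff ℝ (⊤ : ℕ∞) A2) (hη : ContDiff ℝ (⊤ : ℕ∞) η) :
    ContDiff ℝ (⊤ : ℕ∞) (OmF A0 A2 η) := by
  rw [contDiff_clm_apply_iff]
  intro a
  rw [contDiff_clm_apply_iff]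
  intro b
  simp only [OmF_apply]
  fun_prop

lemma OmF_closed {A0 A2 : E → E →L[ℝ] E →L[ℝ] ℝ} {η : E → E →L[ℝ] ℝ}
    (h0 : ContDiff ℝ (⊤ : ℕ∞) A0) (h2 : ContDiff ℝ (⊤ : ℕ∞) A2) (hη : ContDiff ℝ (⊤ : ℕ∞) η)
    (p : ℝ × E) (c0 : ClosedAt A0 p.2) (c2 : ClosedAt A2 p.2)
    (hd : ∀ u v, A2 p.2 u v - A0 p.2 u v = fderiv ℝ η p.2 u v - fderiv ℝ η p.2 v u) :
    ClosedAt (OmF A0 A2 η) p := by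
  have hΩ := (OmF_contDiff h0 h2 hη).differentiable (by simp) p
  have d0 : ∀ u v, HasFDerivAt (fun q : ℝ × E => A0 q.2 u v)
      ((((fderiv ℝ A0 p.2).flip u).flip v).comp (ContinuousLinearMap.snd ℝ ℝ E)) p := by
    intro u v
    have h1 := HasFDerivAt.comp (g := A0) p (h0.differentiable (by simp) p.2).hasFDerivAt
      (hasFDerivAt_snd (𝕜 := ℝ) (E := ℝ) (F := E) (p := p))
    have h3 := (h1.clm_apply (hasFDerivAt_const u p)).clm_apply (hasFDerivAt_const v p)
    convert! h3 using 1
    ext <;> simp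
  have d2 : ∀ u v, HasFDerivAt (fun q : ℝ × E => A2 q.2 u v)
      ((((fderiv ℝ A2 p.2).flip u).flip v).comp (ContinuousLinearMap.snd ℝ ℝ E)) p := by
    intro u v
    have h1 := HasFDerivAt.comp (g := A2) p (h2.differentiable (by simp) p.2).hasFDerivAt
      (hasFDerivAt_snd (𝕜 := ℝ) (E := ℝ) (F := E) (p := p))
    have h3 := (h1.clm_apply (hasFDerivAt_const u p)).clm_apply (hasFDerivAt_const v p)
    convert! h3 using 1
    ext <;> simp
  have de : ∀ u, HasFDerivAt (fun q : ℝ × E => η q.2 u)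
      (((fderiv ℝ η p.2).flip u).comp (ContinuousLinearMap.snd ℝ ℝ E)) p := by
    intro u
    have h1 := HasFDerivAt.comp (g := η) p (hη.differentiable (by simp) p.2).hasFDerivAt
      (hasFDerivAt_snd (𝕜 := ℝ) (E := ℝ) (F := E) (p := p))
    have h3 := h1.clm_apply (hasFDerivAt_const u p)
    convert! h3 using 1
    ext <;> simp
  have key : ∀ a b c : ℝ × E, fderiv ℝ (OmF A0 A2 η) p a b c =
      fderiv ℝ A0 p.2 a.2 b.2 c.2 + a.1 * (A2 p.2 b.2 c.2 - A0 p.2 b.2 c.2)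
      + p.1 * (fderiv ℝ A2 p.2 a.2 b.2 c.2 - fderiv ℝ A0 p.2 a.2 b.2 c.2)
      + b.1 * fderiv ℝ η p.2 a.2 c.2 - c.1 * fderiv ℝ η p.2 a.2 b.2 := by
    intro a b c
    rw [← fderiv_apply2 hΩ]
    simp only [OmF_apply]
    have h := (((d0 b.2 c.2).add ((hasFDerivAt_fst (𝕜 := ℝ) (E := ℝ) (F := E) (p := p)).mul
      ((d2 b.2 c.2).sub (d0 b.2 c.2)))).add ((de c.2).const_mul b.1)).sub ((de b.2).const_mul c.1)
    refine (congrArg (fun l : (ℝ × E) →L[ℝ] ℝ => l a) h.fderiv).trans ?_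
    simp
    ring
  intro a b c
  rw [key, key, key]
  have k0 := c0 a.2 b.2 c.2
  have k2 := c2 a.2 b.2 c.2
  rw [hd, hd, hd]
  linear_combination (1 - p.1) * k0 + p.1 * k2

lemma equiv_of_nondeg (A : E →L[ℝ] E →L[ℝ] ℝ) (h : ∀ u, (∀ v, A u v = 0) → u = 0) :
    ∃ e : E ≃L[ℝ] (E →L[ℝ] ℝ), (e : E →L[ℝ] (E →L[ℝ] ℝ)) = A := by
  have hinj : Function.Injective A := by
    rw [injective_iff_map_eq_zero]
    intro u hu
    exact h u fun v => by rw [hu]; rfl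
  have hfr : Module.finrank ℝ E = Module.finrank ℝ (E →L[ℝ] ℝ) := by
    rw [← (LinearMap.toContinuousLinearMap (𝕜 := ℝ) (E := E) (F' := ℝ)).finrank_eq]
    exact (Subspace.dual_finrank_eq (K := ℝ) (V := E)).symm
  refine ⟨(LinearMap.linearEquivOfInjective (A : E →ₗ[ℝ] (E →L[ℝ] ℝ)) hinj
    hfr).toContinuousLinearEquiv, ?_⟩
  ext u v
  simp [LinearMap.linearEquivOfInjective_apply]

/-- the local relation in the path argument -/
def MoserRel (A0 A2 : E → E →L[ℝ] E →L[ℝ] ℝ) (c : ℝ → E) (t t' : ℝ) : Prop :=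
  ∃ Ψ : E → E, Ψ 0 = 0 ∧ (∃ U ∈ 𝓝 (0:E), ContDiffOn ℝ (⊤ : ℕ∞) Ψ U) ∧
    (∀ᶠ s in 𝓝 (0:ℝ), Ψ (c s) = c s) ∧
    ∀ᶠ x in 𝓝 (0:E), ∀ u v, inter A0 A2 t' (Ψ x) (fderiv ℝ Ψ x u) (fderiv ℝ Ψ x v)
      = inter A0 A2 t x u v

lemma germ_diff {F : Type} [NormedAddCommGroup F] [NormedSpace ℝ F] {X : Type}
    [NormedAddCommGroup X] [NormedSpace ℝ X] {Ψ : X → F} {p : X}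
    (h : ∃ U ∈ 𝓝 p, ContDiffOn ℝ (⊤ : ℕ∞) Ψ U) : ∀ᶠ x in 𝓝 p, DifferentiableAt ℝ Ψ x := by
  obtain ⟨U, hU, h⟩ := h
  filter_upwards [eventually_mem_nhds_iff.2 hU] with x hx
  exact (h.contDiffAt hx).differentiableAt (by simp)

lemma germ_comp {X Y Z : Type} [NormedAddCommGroup X] [NormedSpace ℝ X]
    [NormedAddCommGroup Y] [NormedSpace ℝ Y] [NormedAddCommGroup Z] [NormedSpace ℝ Z]
    {f : X → Y} {g : Y → Z} {p : X}
    (hf : ∃ U ∈ 𝓝 p, ContDiffOn ℝ (⊤ : ℕ∞) f U)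
    (hg : ∃ U ∈ 𝓝 (f p), ContDiffOn ℝ (⊤ : ℕ∞) g U) :
    ∃ U ∈ 𝓝 p, ContDiffOn ℝ (⊤ : ℕ∞) (g ∘ f) U := by
  obtain ⟨U, hU, h⟩ := hf
  obtain ⟨V, hV, hg⟩ := hg
  have hc : ContinuousAt f p := (h.contDiffAt hU).continuousAt
  exact ⟨U ∩ f ⁻¹' V, inter_mem hU (hc hV), hg.comp (h.mono Set.inter_subset_left)
    (fun x hx => hx.2)⟩

lemma MoserRel.trans {A0 A2 : E → E →L[ℝ] E →L[ℝ] ℝ} {c : ℝ → E} {t t' t'' : ℝ}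
    (h1 : MoserRel A0 A2 c t t') (h2 : MoserRel A0 A2 c t' t'') : MoserRel A0 A2 c t t'' := by
  obtain ⟨Ψ, p0, ps, pc, pp⟩ := h1
  obtain ⟨Ψ', q0, qs, qc, qp⟩ := h2
  have hcont : Tendsto Ψ (𝓝 0) (𝓝 0) := by
    have := (germ_diff ps).self_of_nhds.continuousAt.tendsto
    rwa [p0] at this
  refine ⟨Ψ' ∘ Ψ, by simp [p0, q0], germ_comp ps (by rw [p0]; exact qs), ?_, ?_⟩
  · filter_upwards [pc, qc] with s h1 h2
    simp [h1, h2]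
  · filter_upwards [pp, hcont.eventually qp, germ_diff ps, hcont.eventually (germ_diff qs)]
      with x h1 h2 h3 h4 u v
    rw [fderiv_comp x h4 h3]
    simp only [Function.comp_apply, ContinuousLinearMap.comp_apply]
    rw [h2, h1]
end moser

end Part8

section Part9

section moser
variable {E : Type} [NormedAddCommGroup E] [NormedSpace ℝ E] [FiniteDimensional ℝ E]

lemma moser_field {A0 A2 : E → E →L[ℝ] E →L[ℝ] ℝ} {η : E → E →L[ℝ] ℝ}
    (h0 : ContDiff ℝ (⊤ : ℕ∞) A0) (h2 : ContDiff ℝ (⊤ : ℕ∞) A2) (hη : ContDiff ℝ (⊤ : ℕ∞) η)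
    (hA : A2 0 = A0 0) (hnd : ∀ u, (∀ v, A0 0 u v = 0) → u = 0) (t0 : ℝ) :
    ∃ X : ℝ × E → E, ContDiff ℝ (⊤ : ℕ∞) X ∧ ∀ᶠ p in 𝓝 ((t0, 0) : ℝ × E),
      (∀ v, inter A0 A2 p.1 p.2 (X p) v = - η p.2 v) ∧ (η p.2 = 0 → X p = 0) := by
  let A : ℝ × E → E →L[ℝ] E →L[ℝ] ℝ := fun p => inter A0 A2 p.1 p.2
  have hAc : ContDiff ℝ (⊤ : ℕ∞) A := by
    rw [contDiff_clm_apply_iff]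
    intro a
    rw [contDiff_clm_apply_iff]
    intro b
    simp only [A, inter, _root_.add_apply, _root_.smul_apply, _root_.sub_apply, smul_eq_mul]
    fun_prop
  let S : Set (ℝ × E) := A ⁻¹' (Set.range ContinuousLinearEquiv.toContinuousLinearMap)
  have hSo : IsOpen S := ContinuousLinearEquiv.isOpen.preimage hAc.continuous
  have hS : S ∈ 𝓝 ((t0, 0) : ℝ × E) := by
    refine hSo.mem_nhds ?_
    obtain ⟨e, he⟩ := equiv_of_nondeg (A0 0) hnd
    refine ⟨e, ?_⟩
    rw [he]
    ext u v
    simp [A, inter, hA]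
  let X0 : ℝ × E → E := fun p => - (A p).inverse (η p.2)
  have hX0 : ContDiffOn ℝ (⊤ : ℕ∞) X0 S := by
    intro p hp
    obtain ⟨e, he⟩ := hp
    have h1 : ContDiffAt ℝ (⊤ : ℕ∞) ContinuousLinearMap.inverse (A p) := by
      rw [← he]; exact contDiffAt_map_inverse e
    have h2 : ContDiffAt ℝ (⊤ : ℕ∞) (fun p => (A p).inverse) p := h1.comp p hAc.contDiffAt
    have h3 : ContDiffAt ℝ (⊤ : ℕ∞) (fun p : ℝ × E => η p.2) p :=
      (hη.comp contDiff_snd).contDiffAt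
    exact (h2.clm_apply h3).neg.contDiffWithinAt
  obtain ⟨X, hX, hXe⟩ := globalize X0 (t0, 0) ⟨S, hS, hX0⟩
  refine ⟨X, hX, ?_⟩
  filter_upwards [hXe, hS] with p hp hpS
  obtain ⟨e, he⟩ := hpS
  have hXp : X p = - e.symm (η p.2) := by
    rw [hp]
    simp only [X0]
    rw [← he, ContinuousLinearMap.inverse_equiv]
    rfl
  constructor
  · intro v
    have : inter A0 A2 p.1 p.2 = (e : E →L[ℝ] (E →L[ℝ] ℝ)) := he.symm
    rw [this, hXp]
    simp
  · intro h
    rw [hXp, h]; simp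

lemma moser_local {A0 A2 : E → E →L[ℝ] E →L[ℝ] ℝ} {η : E → E →L[ℝ] ℝ}
    (h0 : ContDiff ℝ (⊤ : ℕ∞) A0) (h2 : ContDiff ℝ (⊤ : ℕ∞) A2) (hη : ContDiff ℝ (⊤ : ℕ∞) η)
    (s0 : SkewF A0) (s2 : SkewF A2)
    (c0 : ∀ᶠ x in 𝓝 (0:E), ClosedAt A0 x) (c2 : ∀ᶠ x in 𝓝 (0:E), ClosedAt A2 x)
    (hd : ∀ᶠ x in 𝓝 (0:E), ∀ u v, A2 x u v - A0 x u v = fderiv ℝ η x u v - fderiv ℝ η x v u)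
    (hA : A2 0 = A0 0) (hnd : ∀ u, (∀ v, A0 0 u v = 0) → u = 0)
    (c : ℝ → E) (hc0 : c 0 = 0) (hcc : ContinuousAt c 0) (hcη : ∀ᶠ s in 𝓝 (0:ℝ), η (c s) = 0)
    (t0 : ℝ) : ∃ δ > 0, ∀ t t', |t - t0| < δ → |t' - t0| < δ → MoserRel A0 A2 c t t' := by
  obtain ⟨X, hX, hXe⟩ := moser_field h0 h2 hη hA hnd t0
  let V : ℝ × E → ℝ × E := fun p => (1, X p)
  have hV : ContDiff ℝ (⊤ : ℕ∞) V := contDiff_const.prodMk hX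
  obtain ⟨φ, ⟨U, hU, hUo, hφ⟩, hid, hder, hline⟩ := exists_flow V hV (t0, 0) (1, 0)
  have hsnd : Tendsto (fun p : ℝ × E => p.2) (𝓝 (t0, 0)) (𝓝 0) := continuous_snd.tendsto _
  have hpull := flow_pull V (OmF A0 A2 η) (OmF_contDiff h0 h2 hη) (OmF_skew η s0 s2) (t0, 0)
    (by
      filter_upwards [hsnd.eventually c0, hsnd.eventually c2, hsnd.eventually hd] with p a b e
      exact OmF_closed h0 h2 hη p a b e)
    (by
      filter_upwards [hXe] with p hp v
      have e1 := hp.1 v.2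
      have e2 := hp.1 (X p)
      have e3 := s0 p.2 (X p) (X p)
      have e4 := s2 p.2 (X p) (X p)
      simp only [inter, _root_.add_apply, _root_.smul_apply,
        _root_.sub_apply, smul_eq_mul] at e1 e2
      have e3' : A0 p.2 (X p) (X p) = 0 := by linarith
      have e4' : A2 p.2 (X p) (X p) = 0 := by linarith
      rw [e3', e4'] at e2
      have e5 : η p.2 (X p) = 0 := by linarith
      rw [OmF_apply]
      simp only [V]
      rw [e5]
      linarith)
    φ U hU hUo hφ hid hder
  -- first component of the flow
  have hUe : ∀ᶠ q in 𝓝 ((0:ℝ), ((t0, 0) : ℝ × E)), q ∈ U := hU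
  have hfst : ∀ᶠ q in 𝓝 ((0:ℝ), ((t0, 0) : ℝ × E)), (φ q).1 = q.2.1 + q.1 := by
    rw [nhds_prod_eq] at hder
    obtain ⟨pa, hpa, pb, hpb, hab⟩ := eventually_prod_iff.1 hder
    obtain ⟨r, hr, hra⟩ := Metric.eventually_nhds_iff.1 hpa
    have e1 : ∀ᶠ q in 𝓝 ((0:ℝ), ((t0, 0) : ℝ × E)), |q.1| < r := by
      have : Tendsto (fun q : ℝ × (ℝ × E) => |q.1|) (𝓝 (0, (t0, 0))) (𝓝 |(0:ℝ)|) :=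
        (continuous_fst.abs).tendsto _
      rw [abs_zero] at this
      exact this.eventually (gt_mem_nhds hr)
    have e2 : ∀ᶠ q : ℝ × (ℝ × E) in 𝓝 ((0:ℝ), (t0, 0)), pb q.2 ∧ φ (0, q.2) = q.2 := by
      have : Tendsto (fun q : ℝ × (ℝ × E) => q.2) (𝓝 ((0:ℝ), (t0, 0))) (𝓝 (t0, 0)) :=
        continuous_snd.tendsto _
      exact this.eventually (hpb.and hid)
    filter_upwards [e1, e2] with q hq1 hq2
    have := const_of_deriv (fun s => (φ (s, q.2)).1 - s) r (fun ε hε => by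
      have h := hab (hra (by simpa using hε)) hq2.1
      have h1 : HasDerivAt (fun s => (φ (s, q.2)).1) 1 ε :=
        HasFDerivAt.comp_hasDerivAt (l := Prod.fst) ε
          (ContinuousLinearMap.fst ℝ ℝ E).hasFDerivAt h
      have h2 := h1.sub (hasDerivAt_id' ε)
      rw [sub_self] at h2
      exact h2) q.1 hq1
    simp only [hq2.2] at this
    have h' : (φ q).1 - q.1 = q.2.1 - 0 := this
    linarith
  have hlineX : ∀ᶠ p in 𝓝 ((t0, 0) : ℝ × E), η p.2 = 0 → V p = (1, 0) := by
    filter_upwards [hXe] with p hp h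
    simp [V, hp.2 h]
  -- collect
  have hall := ((hpull.and hline).and (hfst.eventually_nhds.and hUe))
  obtain ⟨r, hr, hrall⟩ := Metric.eventually_nhds_iff.1 hall
  obtain ⟨r', hr', hrX⟩ := Metric.eventually_nhds_iff.1 hlineX
  have hdist : ∀ (ε t : ℝ) (x : E) (ρ : ℝ), |ε| < ρ → |t - t0| < ρ → ‖x‖ < ρ →
      dist (ε, (t, x)) ((0:ℝ), ((t0, 0) : ℝ × E)) < ρ := by
    intro ε t x ρ a b d
    simp only [Prod.dist_eq, dist_zero_right, Real.norm_eq_abs, Real.dist_eq]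
    exact max_lt a (max_lt b d)
  have hdist' : ∀ (t : ℝ) (x : E) (ρ : ℝ), |t - t0| < ρ → ‖x‖ < ρ →
      dist (t, x) ((t0, 0) : ℝ × E) < ρ := by
    intro t x ρ b d
    simp only [Prod.dist_eq, dist_zero_right, Real.dist_eq]
    exact max_lt b d
  refine ⟨min r r' / 3, by positivity, fun t t' ht ht' => ?_⟩
  have hm1 := min_le_left r r'
  have hm2 := min_le_right r r'
  have hm0 : 0 < min r r' := by positivity
  have hε : |t' - t| < 2 * (min r r' / 3) := by
    rw [abs_lt] at ht ht' ⊢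
    constructor <;> linarith
  have htr : |t - t0| < r := by linarith
  have hεr : |t' - t| < r := by linarith
  have hgood : ∀ x : E, ‖x‖ < r → _ := fun x hx => hrall (hdist (t' - t) t x r hεr htr hx)
  let Ψ : E → E := fun x => (φ (t' - t, (t, x))).2
  have hemb : ∀ x, HasFDerivAt (fun x : E => (t' - t, (t, x)))
      ((ContinuousLinearMap.inr ℝ ℝ (ℝ × E)).comp (ContinuousLinearMap.inr ℝ ℝ E)) x := by
    intro x
    have := (hasFDerivAt_const (t' - t) x).prodMk
      ((hasFDerivAt_const t x).prodMk (hasFDerivAt_id (𝕜 := ℝ) x))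
    convert! this using 1
  have hball : ∀ᶠ x in 𝓝 (0:E), ‖x‖ < min r r' := by
    have := Metric.ball_mem_nhds (0:E) hm0
    filter_upwards [this] with x hx
    simpa using hx
  have hΨc : ∀ᶠ s in 𝓝 (0:ℝ), Ψ (c s) = c s := by
    have hct : Tendsto c (𝓝 0) (𝓝 0) := by
      have := hcc.tendsto; rwa [hc0] at this
    filter_upwards [hcη, hct.eventually hball] with s h1 h2
    have h3 := (hgood (c s) (by linarith)).1.2 (by
      intro τ hτ
      have h4 := hrX (hdist' (t + τ) (c s) r' ?_ (by linarith)) h1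
      · simpa using h4
      · simp only at hτ
        have hτ' : |τ| < 2 * (min r r' / 3) := lt_of_le_of_lt hτ hε
        rw [abs_lt] at ht hτ' ⊢
        constructor <;> linarith)
    simp only [Ψ]
    rw [h3]; simp
  refine ⟨Ψ, ?_, ?_, hΨc, ?_⟩
  · have := hΨc.self_of_nhds
    rwa [hc0] at this
  · refine ⟨Metric.ball 0 r, Metric.ball_mem_nhds _ hr, ?_⟩
    have h1 : ContDiffOn ℝ (⊤ : ℕ∞) (fun x : E => φ (t' - t, (t, x))) (Metric.ball 0 r) := by
      refine hφ.comp (f := fun x : E => (t' - t, (t, x))) (by fun_prop) ?_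
      intro x hx
      exact (hgood x (by simpa using hx)).2.2
    exact contDiff_snd.comp_contDiffOn h1
  · filter_upwards [hball] with x hx u v
    obtain ⟨⟨g1, -⟩, g2, g3⟩ := hgood x (by linarith)
    set q : ℝ × (ℝ × E) := (t' - t, (t, x)) with hq
    have hφd : HasFDerivAt φ (fderiv ℝ φ q) q :=
      ((hφ.contDiffAt (hUo.mem_nhds g3)).differentiableAt (by simp)).hasFDerivAt
    have hcomp : HasFDerivAt (fun x : E => φ (t' - t, (t, x))) ((fderiv ℝ φ q).comp
        ((ContinuousLinearMap.inr ℝ ℝ (ℝ × E)).comp (ContinuousLinearMap.inr ℝ ℝ E))) x :=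
      HasFDerivAt.comp (g := φ) x hφd (hemb x)
    have hΨd : ∀ u, fderiv ℝ Ψ x u = (fderiv ℝ φ q (0, (0, u))).2 := by
      intro u
      have h := hcomp.snd
      exact congrArg (fun l : E →L[ℝ] E => l u) h.fderiv
    have hf1 : ∀ u : E, (fderiv ℝ φ q (0, (0, u))).1 = 0 := by
      intro u
      have h := hφd.fst
      have h' : HasFDerivAt (fun q : ℝ × (ℝ × E) => q.2.1 + q.1)
          ((ContinuousLinearMap.fst ℝ ℝ E).comp (ContinuousLinearMap.snd ℝ ℝ (ℝ × E))
            + ContinuousLinearMap.fst ℝ ℝ (ℝ × E)) q :=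
        ((ContinuousLinearMap.fst ℝ ℝ E).comp
          (ContinuousLinearMap.snd ℝ ℝ (ℝ × E))).hasFDerivAt.add
          (ContinuousLinearMap.fst ℝ ℝ (ℝ × E)).hasFDerivAt
      have h'' := h'.congr_of_eventuallyEq g2
      have := congrArg (fun l : (ℝ × (ℝ × E)) →L[ℝ] ℝ => l (0, (0, u))) (h.unique h'')
      simpa using this
    have key := g1 (0, u) (0, v)
    rw [OmF_apply, OmF_apply, hf1, hf1, g2.self_of_nhds] at key
    rw [hΨd, hΨd]
    simp only [inter, _root_.add_apply, _root_.smul_apply,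
        _root_.sub_apply, smul_eq_mul, Ψ]
    simp only [hq, zero_mul, add_zero, sub_zero] at key ⊢
    rw [show t + (t' - t) = t' by ring] at key
    exact key

lemma moser {A0 A2 : E → E →L[ℝ] E →L[ℝ] ℝ} {η : E → E →L[ℝ] ℝ}
    (h0 : ContDiff ℝ (⊤ : ℕ∞) A0) (h2 : ContDiff ℝ (⊤ : ℕ∞) A2) (hη : ContDiff ℝ (⊤ : ℕ∞) η)
    (s0 : SkewF A0) (s2 : SkewF A2)
    (c0 : ∀ᶠ x in 𝓝 (0:E), ClosedAt A0 x) (c2 : ∀ᶠ x in 𝓝 (0:E), ClosedAt A2 x)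
    (hd : ∀ᶠ x in 𝓝 (0:E), ∀ u v, A2 x u v - A0 x u v = fderiv ℝ η x u v - fderiv ℝ η x v u)
    (hA : A2 0 = A0 0) (hnd : ∀ u, (∀ v, A0 0 u v = 0) → u = 0)
    (c : ℝ → E) (hc0 : c 0 = 0) (hcc : ContinuousAt c 0) (hcη : ∀ᶠ s in 𝓝 (0:ℝ), η (c s) = 0) :
    ∃ Ψ : E → E, Ψ 0 = 0 ∧ (∃ U ∈ 𝓝 (0:E), ContDiffOn ℝ (⊤ : ℕ∞) Ψ U) ∧
    (∀ᶠ s in 𝓝 (0:ℝ), Ψ (c s) = c s) ∧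
    ∀ᶠ x in 𝓝 (0:E), ∀ u v, A2 (Ψ x) (fderiv ℝ Ψ x u) (fderiv ℝ Ψ x v) = A0 x u v := by
  have h : MoserRel A0 A2 c 0 1 := by
    refine (isPreconnected_univ (α := ℝ)).induction₂' (MoserRel A0 A2 c) ?_
      (fun x y z _ _ _ => MoserRel.trans) trivial trivial
    intro t0 _
    obtain ⟨δ, hδ, h⟩ := moser_local h0 h2 hη s0 s2 c0 c2 hd hA hnd c hc0 hcc hcη t0
    rw [nhdsWithin_univ]
    filter_upwards [Metric.ball_mem_nhds t0 hδ] with t ht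
    have ht' : |t - t0| < δ := by rwa [Metric.mem_ball, Real.dist_eq] at ht
    exact ⟨h t0 t (by simpa using hδ) ht', h t t0 ht' (by simpa using hδ)⟩
  obtain ⟨Ψ, a, b, d, e⟩ := h
  refine ⟨Ψ, a, b, d, ?_⟩
  simpa [inter] using e
end moser

end Part9

section Part10

set_option linter.unusedSectionVars false
section slices
variable {E F : Type} [NormedAddCommGroup E] [NormedSpace ℝ E]
  [NormedAddCommGroup F] [NormedSpace ℝ F]

lemma slice_snd {H : ℝ × E → F} {t : ℝ} {x : E} (h : DifferentiableAt ℝ H (t, x)) (u : E) :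
    fderiv ℝ H (t, x) (0, u) = fderiv ℝ (fun y => H (t, y)) x u := by
  have h1 : HasFDerivAt (fun y : E => (t, y)) (ContinuousLinearMap.inr ℝ ℝ E) x :=
    (hasFDerivAt_const t x).prodMk (hasFDerivAt_id x)
  have h2 : HasFDerivAt (fun y => H (t, y))
      ((fderiv ℝ H (t, x)).comp (ContinuousLinearMap.inr ℝ ℝ E)) x :=
    HasFDerivAt.comp (g := H) x h.hasFDerivAt h1
  rw [h2.fderiv]; simp

lemma slice_fst {H : ℝ × E → F} {t : ℝ} {x : E} (h : DifferentiableAt ℝ H (t, x)) :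
    fderiv ℝ H (t, x) (1, 0) = deriv (fun τ => H (τ, x)) t := by
  have h4 : HasDerivAt (fun s : ℝ => (s, x)) ((1:ℝ), (0:E)) t :=
    (hasDerivAt_id t).prodMk (hasDerivAt_const t x)
  have h5 : HasDerivAt (fun s => H (s, x)) (fderiv ℝ H (t, x) (1, 0)) t :=
    HasFDerivAt.comp_hasDerivAt (l := H) t h.hasFDerivAt h4
  exact h5.deriv.symm

lemma tube {H : ℝ × E → F} (hH : Continuous H) (h0 : ∀ t, H (t, 0) = 0) {p : F → Prop}
    (hp : ∀ᶠ y in 𝓝 (0:F), p y) : ∀ᶠ x in 𝓝 (0:E), ∀ t ∈ Set.Icc (0:ℝ) 1, p (H (t, x)) := by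
  refine isCompact_Icc.eventually_forall_of_forall_eventually (fun t _ => ?_)
  have h1 : Tendsto (fun z : E × ℝ => H (z.2, z.1)) (𝓝 (0, t)) (𝓝 0) := by
    have : Continuous (fun z : E × ℝ => H (z.2, z.1)) := by fun_prop
    have h2 := this.tendsto (0, t)
    simpa [h0] using h2
  exact h1.eventually hp

lemma d_closed {β : E → E →L[ℝ] ℝ} (hβ : ContDiff ℝ (⊤ : ℕ∞) β)
    {A0 A1 α : E → E →L[ℝ] E →L[ℝ] ℝ} (h0 : ContDiff ℝ (⊤ : ℕ∞) A0)
    (h1 : ContDiff ℝ (⊤ : ℕ∞) A1) (hα : ContDiff ℝ (⊤ : ℕ∞) α)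
    (c0 : ∀ᶠ x in 𝓝 (0:E), ClosedAt A0 x) (c1 : ∀ᶠ x in 𝓝 (0:E), ClosedAt A1 x)
    (hd : ∀ᶠ x in 𝓝 (0:E), ∀ u v, A1 x u v - A0 x u v = α x u v +
      (fderiv ℝ β x u v - fderiv ℝ β x v u)) : ∀ᶠ x in 𝓝 (0:E), ClosedAt α x := by
  have hβ' : ContDiff ℝ (⊤ : ℕ∞) (fderiv ℝ β) := hβ.fderiv_right (by simp)
  filter_upwards [c0, c1, hd.eventually_nhds] with x k0 k1 hx u v w
  have d0 := h0.differentiable (by simp) x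
  have d1 := h1.differentiable (by simp) x
  have da := hα.differentiable (by simp) x
  have db := hβ'.differentiable (by simp) x
  have hsym : ∀ a b, fderiv ℝ (fderiv ℝ β) x a b = fderiv ℝ (fderiv ℝ β) x b a := fun a b =>
    (((contDiff_infty.1 hβ 2).contDiffAt (x := x)).isSymmSndFDerivAt (by simp)) a b
  have key : ∀ a b c, fderiv ℝ α x a b c = fderiv ℝ A1 x a b c - fderiv ℝ A0 x a b c
      - (fderiv ℝ (fderiv ℝ β) x a b c - fderiv ℝ (fderiv ℝ β) x a c b) := by
    intro a b c
    rw [← fderiv_apply2 da]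
    have he : (fun q => α q b c) =ᶠ[𝓝 x] fun q => (A1 q b c - A0 q b c) -
        (fderiv ℝ β q b c - fderiv ℝ β q c b) := by
      filter_upwards [hx] with q hq
      rw [hq b c]; ring
    rw [he.fderiv_eq]
    have ap : ∀ {B : E → E →L[ℝ] E →L[ℝ] ℝ} (_ : DifferentiableAt ℝ B x) (b c : E),
        DifferentiableAt ℝ (fun q => B q b c) x := fun h b c =>
      (h.clm_apply (differentiableAt_const _)).clm_apply (differentiableAt_const _)
    rw [fderiv_fun_sub ((ap d1 b c).fun_sub (ap d0 b c)) ((ap db b c).fun_sub (ap db c b)),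
      fderiv_fun_sub (ap d1 b c) (ap d0 b c), fderiv_fun_sub (ap db b c) (ap db c b)]
    simp only [_root_.sub_apply]
    rw [fderiv_apply2 d1, fderiv_apply2 d0, fderiv_apply2 db, fderiv_apply2 db]
  rw [key, key, key, hsym v u, hsym w u, hsym w v]
  have e0 := k0 u v w
  have e1 := k1 u v w
  linarith
end slices

section core
variable {m : ℕ} (K : Fin m → Prop) [DecidablePred K] (μ : Fin m → ℕ)

def dil (p : ℝ × (Fin m → ℝ)) : Fin m → ℝ := fun i => p.1 ^ (if K i then μ i else 1) * p.2 i

lemma dil_contDiff : ContDiff ℝ (⊤ : ℕ∞) (dil K μ) := by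
  refine contDiff_pi.2 fun i => ?_
  unfold dil
  fun_prop

lemma dil_one (y : Fin m → ℝ) : dil K μ (1, y) = y := by
  ext i; simp [dil]

lemma dil_zero (hμ : ∀ i, K i → 0 < μ i) (y : Fin m → ℝ) : dil K μ (0, y) = 0 := by
  ext i
  simp only [dil, Pi.zero_apply]
  split_ifs with h
  · simp [(hμ i h).ne']
  · simp

lemma dil_monoC (t s : ℝ) : dil K μ (t, monoC K μ s) = monoC K μ (t * s) := by
  ext i
  simp only [dil, monoC]
  split_ifs with h
  · rw [mul_pow]
  · simp

lemma monoC_zero (hμ : ∀ i, K i → 0 < μ i) : monoC K μ 0 = 0 := by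
  ext i
  unfold monoC
  split_ifs with hi
  · simp [(hμ i hi).ne']
  · rfl

/-- Poincare lemma relative to the curve. -/
lemma rel_poincare (hμ : ∀ i, K i → 0 < μ i) {α : (Fin m → ℝ) → (Fin m → ℝ) →L[ℝ] (Fin m → ℝ) →L[ℝ] ℝ}
    (hα : ContDiff ℝ (⊤ : ℕ∞) α) (sα : SkewF α) (cα : ∀ᶠ x in 𝓝 (0 : Fin m → ℝ), ClosedAt α x)
    (P Q : (Fin m → ℝ) → (Fin m → ℝ)) (hP : ContDiff ℝ (⊤ : ℕ∞) P) (hQ : ContDiff ℝ (⊤ : ℕ∞) Q)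
    (P0 : P 0 = 0) (Q0 : Q 0 = 0) (hQP : ∀ᶠ x in 𝓝 0, Q (P x) = x)
    (hPQ : ∀ᶠ y in 𝓝 0, P (Q y) = y)
    (hαc : ∀ᶠ s in 𝓝 (0:ℝ), α (Q (monoC K μ s)) = 0) :
    ∃ κ : (Fin m → ℝ) → (Fin m → ℝ) →L[ℝ] ℝ, ContDiff ℝ (⊤ : ℕ∞) κ ∧
      (∀ᶠ x in 𝓝 0, ∀ u v, fderiv ℝ κ x u v - fderiv ℝ κ x v u = α x u v) ∧
      ∀ᶠ s in 𝓝 (0:ℝ), κ (Q (monoC K μ s)) = 0 := by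
  let H : ℝ × (Fin m → ℝ) → (Fin m → ℝ) := fun p => Q (dil K μ (p.1, P p.2))
  have hH : ContDiff ℝ (⊤ : ℕ∞) H :=
    hQ.comp ((dil_contDiff K μ).comp (contDiff_fst.prodMk (hP.comp contDiff_snd)))
  have hHd := hH.differentiable (by simp)
  have H0 : ∀ t, H (t, 0) = 0 := by
    intro t
    have : dil K μ (t, 0) = 0 := by ext i; simp [dil]
    simp [H, P0, this, Q0]
  obtain ⟨κ, hκ, k1, k2⟩ := homotopy_formula H hH α hα sα
  refine ⟨κ, hκ, ?_, ?_⟩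
  · filter_upwards [tube hH.continuous H0 cα, hQP.eventually_nhds] with x hx hx' u v
    rw [k1 x hx]
    have e1 : H (1, x) = x := by simp only [H, dil_one]; exact hx'.self_of_nhds
    have e2 : ∀ u, fderiv ℝ H (1, x) (0, u) = u := by
      intro u
      rw [slice_snd (hHd _)]
      have : (fun y => H (1, y)) =ᶠ[𝓝 x] id := by
        filter_upwards [hx'] with y hy
        simp only [H, dil_one]; exact hy
      rw [this.fderiv_eq]; simp
    have e3 : ∀ u, fderiv ℝ H (0, x) (0, u) = 0 := by
      intro u
      rw [slice_snd (hHd _)]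
      have : (fun y => H (0, y)) = fun _ => Q 0 := by
        funext y; simp only [H, dil_zero K μ hμ]
      rw [this]; simp
    rw [e1, e2, e2, e3, e3]
    simp
  · obtain ⟨r, hr, hra⟩ := Metric.eventually_nhds_iff.1 hαc
    have hg : Tendsto (monoC K μ) (𝓝 0) (𝓝 0) := by
      have := (monoC_continuous K μ).tendsto 0
      rwa [monoC_zero K μ hμ] at this
    filter_upwards [hg.eventually hPQ, Metric.ball_mem_nhds (0:ℝ) hr] with s h1 h2
    apply k2
    intro t ht u
    have e1 : H (t, Q (monoC K μ s)) = Q (monoC K μ (t * s)) := by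
      simp only [H]; rw [h1, dil_monoC]
    have e2 : α (Q (monoC K μ (t * s))) = 0 := by
      apply hra
      rw [Metric.mem_ball, dist_zero_right] at h2
      rw [dist_zero_right, norm_mul]
      have : ‖t‖ ≤ 1 := by rw [Real.norm_eq_abs, abs_of_nonneg ht.1]; exact ht.2
      nlinarith [norm_nonneg s, norm_nonneg t]
    rw [e1, e2]; simp
end core

end Part10

section Part11

section core
variable {m : ℕ} (K : Fin m → Prop) [DecidablePred K] (μ : Fin m → ℕ)

lemma fix_monoC (L' : (Fin m → ℝ) →L[ℝ] (Fin m → ℝ))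
    (hL : ∀ j, K j → L' (Pi.single j 1) = Pi.single j 1) (s : ℝ) :
    L' (monoC K μ s) = monoC K μ s := by
  have h : monoC K μ s = ∑ i, monoC K μ s i • (Pi.single i 1 : Fin m → ℝ) := by
    ext j
    simp [Finset.sum_apply, Pi.single_apply]
  conv_lhs => rw [h]
  conv_rhs => rw [h]
  rw [map_sum]
  refine Finset.sum_congr rfl fun i _ => ?_
  rw [map_smul]
  by_cases hi : K i
  · rw [hL i hi]
  · simp [monoC, hi]

/-- Deformation along linear maps fixing the curve. -/
lemma lin_deform (hμ : ∀ i, K i → 0 < μ i)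
    {A : (Fin m → ℝ) → (Fin m → ℝ) →L[ℝ] (Fin m → ℝ) →L[ℝ] ℝ}
    (hA : ContDiff ℝ (⊤ : ℕ∞) A) (sA : SkewF A) (cA : ∀ᶠ x in 𝓝 (0 : Fin m → ℝ), ClosedAt A x)
    (P Q : (Fin m → ℝ) → (Fin m → ℝ)) (hP : ContDiff ℝ (⊤ : ℕ∞) P) (hQ : ContDiff ℝ (⊤ : ℕ∞) Q)
    (P0 : P 0 = 0) (Q0 : Q 0 = 0) (hQP : ∀ᶠ x in 𝓝 0, Q (P x) = x)
    (hPQ : ∀ᶠ y in 𝓝 0, P (Q y) = y) (L' : (Fin m → ℝ) →L[ℝ] (Fin m → ℝ))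
    (hL : ∀ j, K j → L' (Pi.single j 1) = Pi.single j 1) :
    ∃ κ : (Fin m → ℝ) → (Fin m → ℝ) →L[ℝ] ℝ, ContDiff ℝ (⊤ : ℕ∞) κ ∧
      (∀ᶠ x in 𝓝 0, ∀ u v, fderiv ℝ κ x u v - fderiv ℝ κ x v u =
        pbk (fun x => Q (L' (P x))) A x u v - A x u v) ∧
      ∀ᶠ s in 𝓝 (0:ℝ), κ (Q (monoC K μ s)) = 0 := by
  let H : ℝ × (Fin m → ℝ) → (Fin m → ℝ) := fun p => Q (P p.2 + p.1 • (L' (P p.2) - P p.2))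
  have hH : ContDiff ℝ (⊤ : ℕ∞) H := by
    have h1 : ContDiff ℝ (⊤ : ℕ∞) (fun p : ℝ × (Fin m → ℝ) => P p.2) := hP.comp contDiff_snd
    exact hQ.comp (h1.add (contDiff_fst.smul ((L'.contDiff.comp h1).sub h1)))
  have hHd := hH.differentiable (by simp)
  have H0 : ∀ t, H (t, 0) = 0 := by
    intro t
    simp [H, P0, Q0]
  obtain ⟨κ, hκ, k1, k2⟩ := homotopy_formula H hH A hA sA
  refine ⟨κ, hκ, ?_, ?_⟩
  · filter_upwards [tube hH.continuous H0 cA, hQP.eventually_nhds] with x hx hx' u v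
    rw [k1 x hx]
    have e1 : H (0, x) = x := by simp only [H, zero_smul, add_zero]; exact hx'.self_of_nhds
    have e2 : ∀ u, fderiv ℝ H (0, x) (0, u) = u := by
      intro u
      rw [slice_snd (hHd _)]
      have : (fun y => H (0, y)) =ᶠ[𝓝 x] id := by
        filter_upwards [hx'] with y hy
        simp only [H, zero_smul, add_zero]; exact hy
      rw [this.fderiv_eq]; simp
    have e4 : (fun y => H (1, y)) = fun x => Q (L' (P x)) := by
      funext y; simp only [H, one_smul, add_sub_cancel]
    rw [e1, e2, e2, slice_snd (hHd _), slice_snd (hHd _), e4, pbk_apply, congrFun e4 x]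
  · have hg : Tendsto (monoC K μ) (𝓝 0) (𝓝 0) := by
      have := (monoC_continuous K μ).tendsto 0
      rwa [monoC_zero K μ hμ] at this
    filter_upwards [hg.eventually hPQ] with s h1
    apply k2
    intro t ht u
    rw [slice_fst (hHd _)]
    have : (fun τ => H (τ, Q (monoC K μ s))) = fun _ => Q (monoC K μ s) := by
      funext τ
      simp only [H]; rw [h1, fix_monoC K μ L' hL]; simp
    rw [this]; simp

theorem core_thm (hμ : ∀ i, K i → 0 < μ i)
    (hS : ∀ i j, K i → K j → i ≠ j → ∀ s ∈ expS K μ, μ j ≠ μ i + s)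
    {A0 A1 α : (Fin m → ℝ) → (Fin m → ℝ) →L[ℝ] (Fin m → ℝ) →L[ℝ] ℝ}
    {β : (Fin m → ℝ) → (Fin m → ℝ) →L[ℝ] ℝ}
    (h0 : ContDiff ℝ (⊤ : ℕ∞) A0) (h1 : ContDiff ℝ (⊤ : ℕ∞) A1)
    (hα : ContDiff ℝ (⊤ : ℕ∞) α) (hβ : ContDiff ℝ (⊤ : ℕ∞) β)
    (s0 : SkewF A0) (s1 : SkewF A1) (sα : SkewF α)
    (c0 : ∀ᶠ x in 𝓝 (0 : Fin m → ℝ), ClosedAt A0 x)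
    (c1 : ∀ᶠ x in 𝓝 (0 : Fin m → ℝ), ClosedAt A1 x)
    (n0 : ∀ u, (∀ v, A0 0 u v = 0) → u = 0) (n1 : ∀ u, (∀ v, A1 0 u v = 0) → u = 0)
    (hd : ∀ᶠ x in 𝓝 (0 : Fin m → ℝ), ∀ u v, A1 x u v - A0 x u v = α x u v +
      (fderiv ℝ β x u v - fderiv ℝ β x v u))
    (P Q : (Fin m → ℝ) → (Fin m → ℝ)) (hP : ContDiff ℝ (⊤ : ℕ∞) P) (hQ : ContDiff ℝ (⊤ : ℕ∞) Q)
    (P0 : P 0 = 0) (Q0 : Q 0 = 0) (hQP : ∀ᶠ x in 𝓝 0, Q (P x) = x)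
    (hPQ : ∀ᶠ y in 𝓝 0, P (Q y) = y)
    (hαc : ∀ᶠ s in 𝓝 (0:ℝ), α (Q (monoC K μ s)) = 0)
    (hβc : ∀ᶠ s in 𝓝 (0:ℝ), β (Q (monoC K μ s)) = 0) :
    ∃ Ψ : (Fin m → ℝ) → (Fin m → ℝ), Ψ 0 = 0 ∧
      (∃ U ∈ 𝓝 (0 : Fin m → ℝ), ContDiffOn ℝ (⊤ : ℕ∞) Ψ U) ∧
      (∀ᶠ s in 𝓝 (0:ℝ), Ψ (Q (monoC K μ s)) = Q (monoC K μ s)) ∧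
      ∀ᶠ x in 𝓝 (0 : Fin m → ℝ), ∀ u v,
        A1 (Ψ x) (fderiv ℝ Ψ x u) (fderiv ℝ Ψ x v) = A0 x u v := by
  have cα := d_closed hβ h0 h1 hα c0 c1 hd
  obtain ⟨κ, hκ, hκd, hκc⟩ := rel_poincare K μ hμ hα sα cα P Q hP hQ P0 Q0 hQP hPQ hαc
  let η := fun x => β x + κ x
  have hη : ContDiff ℝ (⊤ : ℕ∞) η := hβ.add hκ
  have hηf : ∀ x u v, fderiv ℝ η x u v = fderiv ℝ β x u v + fderiv ℝ κ x u v := by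
    intro x u v
    have := fderiv_fun_add (hβ.differentiable (by simp) x) (hκ.differentiable (by simp) x)
    simp only [η]; rw [this]; rfl
  have hηd : ∀ᶠ x in 𝓝 (0 : Fin m → ℝ), ∀ u v, A1 x u v - A0 x u v =
      fderiv ℝ η x u v - fderiv ℝ η x v u := by
    filter_upwards [hd, hκd] with x a b u v
    rw [a, ← b, hηf, hηf]; ring
  have hηc : ∀ᶠ s in 𝓝 (0:ℝ), η (Q (monoC K μ s)) = 0 := by
    filter_upwards [hβc, hκc] with s a b
    simp [η, a, b]
  -- linear parts
  have dP : HasFDerivAt P (fderiv ℝ P 0) 0 := (hP.differentiable (by simp) 0).hasFDerivAt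
  have dQ : HasFDerivAt Q (fderiv ℝ Q 0) 0 := (hQ.differentiable (by simp) 0).hasFDerivAt
  have dPQ : ∀ u, fderiv ℝ P 0 (fderiv ℝ Q 0 u) = u := by
    intro u
    have a : HasFDerivAt (fun y => P (Q y)) ((fderiv ℝ P 0).comp (fderiv ℝ Q 0)) 0 :=
      HasFDerivAt.comp (g := P) 0 (by rw [Q0]; exact dP) dQ
    have b : HasFDerivAt (fun y => P (Q y)) (ContinuousLinearMap.id ℝ _) 0 :=
      (hasFDerivAt_id _).congr_of_eventuallyEq hPQ
    have := congrArg (fun l : (Fin m → ℝ) →L[ℝ] (Fin m → ℝ) => l u) (a.unique b)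
    simpa using this
  have dQP : ∀ u, fderiv ℝ Q 0 (fderiv ℝ P 0 u) = u := by
    intro u
    have a : HasFDerivAt (fun y => Q (P y)) ((fderiv ℝ Q 0).comp (fderiv ℝ P 0)) 0 :=
      HasFDerivAt.comp (g := Q) 0 (by rw [P0]; exact dQ) dP
    have b : HasFDerivAt (fun y => Q (P y)) (ContinuousLinearMap.id ℝ _) 0 :=
      (hasFDerivAt_id _).congr_of_eventuallyEq hQP
    have := congrArg (fun l : (Fin m → ℝ) →L[ℝ] (Fin m → ℝ) => l u) (a.unique b)
    simpa using this
  have hjet : ∀ j, K j → ∀ v, fderiv ℝ η 0 (fderiv ℝ Q 0 (Pi.single j 1)) v = 0 := by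
    intro j hj v
    have hG : ContDiff ℝ (⊤ : ℕ∞) (fun y => η (Q y) v) :=
      (hη.comp hQ).clm_apply contDiff_const
    have h := jet_lemma K μ hμ hS (fun y => η (Q y) v) hG
      (hηc.mono fun s hs => by simp only [hs]; rfl) j hj
    have a : HasFDerivAt (fun y => η (Q y)) ((fderiv ℝ η 0).comp (fderiv ℝ Q 0)) 0 :=
      HasFDerivAt.comp (g := η) 0
        (by rw [Q0]; exact (hη.differentiable (by simp) 0).hasFDerivAt) dQ
    have b := a.clm_apply (hasFDerivAt_const v (0 : Fin m → ℝ))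
    rw [b.fderiv] at h
    simpa using h
  let W : Submodule ℝ (Fin m → ℝ) :=
    Submodule.span ℝ {w | ∃ j, K j ∧ fderiv ℝ Q 0 (Pi.single j 1) = w}
  have hW : ∀ w ∈ W, ∀ v, fderiv ℝ η 0 w v = 0 := by
    intro w hw v
    induction hw using Submodule.span_induction with
    | mem x hx => obtain ⟨j, hj, rfl⟩ := hx; exact hjet j hj v
    | zero => simp
    | add x y _ _ hx hy => simp [hx, hy]
    | smul a x _ hx => simp [hx]
  have hWW : ∀ w ∈ W, ∀ w' ∈ W, A1 0 w w' = A0 0 w w' := by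
    intro w hw w' hw'
    have := hηd.self_of_nhds w w'
    rw [hW w hw, hW w' hw'] at this
    linarith
  let tb : ((Fin m → ℝ) →L[ℝ] (Fin m → ℝ) →L[ℝ] ℝ) → LinearMap.BilinForm ℝ (Fin m → ℝ) := fun B =>
    LinearMap.mk₂ ℝ (fun u v => B u v) (by simp) (by simp) (by simp) (by simp)
  obtain ⟨L, hLW, hLiso⟩ := witt (tb (A0 0)) (tb (A1 0)) (s0 0) (s1 0) n0 n1 W hWW
  let Lc : (Fin m → ℝ) →L[ℝ] (Fin m → ℝ) := LinearMap.toContinuousLinearMap L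
  let L' : (Fin m → ℝ) →L[ℝ] (Fin m → ℝ) := (fderiv ℝ P 0).comp (Lc.comp (fderiv ℝ Q 0))
  have hL' : ∀ j, K j → L' (Pi.single j 1) = Pi.single j 1 := by
    intro j hj
    have : L (fderiv ℝ Q 0 (Pi.single j 1)) = fderiv ℝ Q 0 (Pi.single j 1) :=
      hLW _ (Submodule.subset_span ⟨j, hj, rfl⟩)
    simp only [L', Lc, ContinuousLinearMap.comp_apply, LinearMap.coe_toContinuousLinearMap']
    rw [this, dPQ]
  let Λ : (Fin m → ℝ) → (Fin m → ℝ) := fun x => Q (L' (P x))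
  have hΛ : ContDiff ℝ (⊤ : ℕ∞) Λ := hQ.comp (L'.contDiff.comp hP)
  have Λ0 : Λ 0 = 0 := by simp [Λ, P0, Q0]
  have dΛ : ∀ u, fderiv ℝ Λ 0 u = L u := by
    intro u
    have a : HasFDerivAt (fun x => L' (P x)) (L'.comp (fderiv ℝ P 0)) 0 :=
      L'.hasFDerivAt.comp 0 dP
    have b : HasFDerivAt Λ ((fderiv ℝ Q 0).comp (L'.comp (fderiv ℝ P 0))) 0 :=
      HasFDerivAt.comp (g := Q) 0 (by simp only [P0, map_zero]; exact dQ) a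
    rw [b.fderiv]
    simp only [L', Lc, ContinuousLinearMap.comp_apply, LinearMap.coe_toContinuousLinearMap']
    rw [dQP, dQP]
  obtain ⟨κ2, hκ2, hκ2d, hκ2c⟩ := lin_deform K μ hμ h1 s1 c1 P Q hP hQ P0 Q0 hQP hPQ L' hL'
  let A2 := pbk Λ A1
  have h2 : ContDiff ℝ (⊤ : ℕ∞) A2 := pbk_contDiff hΛ h1
  have s2 : SkewF A2 := pbk_skew Λ s1
  have c2 : ∀ᶠ x in 𝓝 (0 : Fin m → ℝ), ClosedAt A2 x := by
    have ht : Tendsto Λ (𝓝 0) (𝓝 0) := by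
      have := hΛ.continuous.tendsto 0; rwa [Λ0] at this
    filter_upwards [ht.eventually c1] with x hx
    exact pbk_closed ((contDiff_infty.1 hΛ 2).contDiffAt) (h1.differentiable (by simp) _) s1 hx
      (h2.differentiable (by simp) _)
  have hA20 : A2 0 = A0 0 := by
    apply ContinuousLinearMap.ext; intro u
    apply ContinuousLinearMap.ext; intro v
    rw [pbk_apply, dΛ, dΛ, Λ0]
    exact hLiso u v
  let η2 := fun x => η x + κ2 x
  have hη2 : ContDiff ℝ (⊤ : ℕ∞) η2 := hη.add hκ2
  have hη2d : ∀ᶠ x in 𝓝 (0 : Fin m → ℝ), ∀ u v, A2 x u v - A0 x u v =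
      fderiv ℝ η2 x u v - fderiv ℝ η2 x v u := by
    filter_upwards [hηd, hκ2d] with x a b u v
    have e : ∀ u v, fderiv ℝ η2 x u v = fderiv ℝ η x u v + fderiv ℝ κ2 x u v := by
      intro u v
      have := fderiv_fun_add (hη.differentiable (by simp) x) (hκ2.differentiable (by simp) x)
      simp only [η2]; rw [this]; rfl
    have a' := a u v
    have b' := b u v
    rw [e, e]
    have : A2 x u v = pbk (fun x => Q (L' (P x))) A1 x u v := rfl
    linarith
  have hη2c : ∀ᶠ s in 𝓝 (0:ℝ), η2 (Q (monoC K μ s)) = 0 := by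
    filter_upwards [hηc, hκ2c] with s a b
    simp [η2, a, b]
  obtain ⟨Ψ, a, b, d, e⟩ := moser h0 h2 hη2 s0 s2 c0 c2 hη2d hA20 n0 (fun s => Q (monoC K μ s))
    (by simp only [monoC_zero K μ hμ, Q0])
    (hQ.continuous.comp (monoC_continuous K μ)).continuousAt hη2c
  have hg : Tendsto (monoC K μ) (𝓝 0) (𝓝 0) := by
    have := (monoC_continuous K μ).tendsto 0
    rwa [monoC_zero K μ hμ] at this
  refine ⟨Λ ∘ Ψ, by simp [a, Λ0], germ_comp b ⟨Set.univ, univ_mem, hΛ.contDiffOn⟩, ?_, ?_⟩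
  · filter_upwards [d, hg.eventually hPQ] with s k1 k2
    simp only [Function.comp_apply, k1, Λ]
    rw [k2, fix_monoC K μ L' hL']
  · filter_upwards [e, germ_diff b] with x k1 k2 u v
    rw [fderiv_comp x (hΛ.differentiable (by simp) _) k2]
    simp only [Function.comp_apply, ContinuousLinearMap.comp_apply]
    rw [← k1]
    rfl
end core

end Part11

section final
variable {m : ℕ}

lemma lin_expand (L : (Fin m → ℝ) → ℝ)
    (h : ∀ u₁ u₂ (c : ℝ), L (u₁ + c • u₂) = L u₁ + c * L u₂) (u : Fin m → ℝ) :
    L u = ∑ i, u i * L (Pi.single i 1) := by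
  have h0 : L 0 = 0 := by have := h 0 0 1; simp at this; exact this
  let F : (Fin m → ℝ) →ₗ[ℝ] ℝ :=
    { toFun := L
      map_add' := fun a b => by have := h a b 1; simpa using this
      map_smul' := fun c a => by have := h 0 a c; simpa [h0] using this }
  have := LinearMap.pi_apply_eq_sum_univ F u
  simp only [smul_eq_mul] at this
  have e : ∀ i : Fin m, (fun j => if i = j then (1:ℝ) else 0) = Pi.single i 1 := by
    intro i; ext j; simp [Pi.single_apply, eq_comm]
  simp only [e] at this
  exact this

lemma glob1 {β : Form1 m} (h : IsForm1 m β) :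
    ∃ B : (Fin m → ℝ) → (Fin m → ℝ) →L[ℝ] ℝ, ContDiff ℝ (⊤ : ℕ∞) B ∧
      ∀ᶠ x in 𝓝 (0 : Fin m → ℝ), ∀ u, B x u = β x u := by
  choose c hc hce using fun i : Fin m => globalize (fun x => β x (Pi.single i 1)) 0 (h.2 _)
  refine ⟨fun x => ∑ i, c i x • (ContinuousLinearMap.proj i : (Fin m → ℝ) →L[ℝ] ℝ),
    ContDiff.sum fun i _ => (hc i).smul contDiff_const, ?_⟩
  filter_upwards [Filter.eventually_all.2 hce] with x hx u
  rw [lin_expand (β x) (h.1 x) u]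
  simp [hx, mul_comm]

lemma glob2 {ω : Form2 m} (h : IsForm2 m ω) :
    ∃ A : (Fin m → ℝ) → (Fin m → ℝ) →L[ℝ] (Fin m → ℝ) →L[ℝ] ℝ, ContDiff ℝ (⊤ : ℕ∞) A ∧
      SkewF A ∧ ∀ᶠ x in 𝓝 (0 : Fin m → ℝ), ∀ u v, A x u v = ω x u v := by
  choose c hc hce using fun i : Fin m => fun j : Fin m =>
    globalize (fun x => ω x (Pi.single i 1) (Pi.single j 1)) 0 (h.2.2 _ _)
  let A : (Fin m → ℝ) → (Fin m → ℝ) →L[ℝ] (Fin m → ℝ) →L[ℝ] ℝ := fun x =>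
    ∑ i, ∑ j, ((c i j x - c j i x) / 2) •
      (ContinuousLinearMap.proj i : (Fin m → ℝ) →L[ℝ] ℝ).smulRight
        (ContinuousLinearMap.proj j : (Fin m → ℝ) →L[ℝ] ℝ)
  have hA : ∀ x u v, A x u v = ∑ i, ∑ j, ((c i j x - c j i x) / 2) * (u i * v j) := by
    intro x u v
    simp [A]
  refine ⟨A, ?_, ?_, ?_⟩
  · rw [contDiff_clm_apply_iff]
    intro u
    rw [contDiff_clm_apply_iff]
    intro v
    simp only [hA]
    exact ContDiff.sum fun i _ => ContDiff.sum fun j _ =>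
      (((hc i j).sub (hc j i)).div_const 2).mul contDiff_const
  · intro x u v
    rw [hA, hA, Finset.sum_comm, ← Finset.sum_neg_distrib]
    refine Finset.sum_congr rfl fun i _ => ?_
    rw [← Finset.sum_neg_distrib]
    refine Finset.sum_congr rfl fun j _ => ?_
    ring
  · filter_upwards [Filter.eventually_all.2 fun i => Filter.eventually_all.2 (hce i)] with x hx u v
    rw [hA, lin_expand (fun u => ω x u v) (fun a b r => h.1 x a b v r) u]
    refine Finset.sum_congr rfl fun i _ => ?_
    have hl : ∀ a b (r : ℝ), ω x (Pi.single i 1) (a + r • b)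
        = ω x (Pi.single i 1) a + r * ω x (Pi.single i 1) b := by
      intro a b r
      rw [h.2.1 x _ (a + r • b), h.1, h.2.1 x a, h.2.1 x b]; ring
    rw [lin_expand (ω x (Pi.single i 1)) hl v, Finset.mul_sum]
    refine Finset.sum_congr rfl fun j _ => ?_
    rw [hx, hx, h.2.1 x (Pi.single j 1)]
    ring

lemma closed_glob {ω : Form2 m} (hc : Closed2 m ω)
    {A : (Fin m → ℝ) → (Fin m → ℝ) →L[ℝ] (Fin m → ℝ) →L[ℝ] ℝ} (hA : ContDiff ℝ (⊤ : ℕ∞) A)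
    (he : ∀ᶠ x in 𝓝 (0 : Fin m → ℝ), ∀ u v, A x u v = ω x u v) :
    ∀ᶠ x in 𝓝 (0 : Fin m → ℝ), ClosedAt A x := by
  filter_upwards [hc, he.eventually_nhds] with x h1 h2 u v w
  have hd : DifferentiableAt ℝ A x := (hA.differentiable (by simp)).differentiableAt
  have e : ∀ a b d, fderiv ℝ A x a b d = fderiv ℝ (fun y => ω y b d) x a := by
    intro a b d
    rw [← fderiv_apply2 hd]
    have : (fun q => A q b d) =ᶠ[𝓝 x] fun y => ω y b d := by
      filter_upwards [h2] with y hy using hy b d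
    rw [this.fderiv_eq]
  rw [e, e, e]
  exact h1 u v w

lemma extD_glob {β : Form1 m}
    {B : (Fin m → ℝ) → (Fin m → ℝ) →L[ℝ] ℝ} (hB : ContDiff ℝ (⊤ : ℕ∞) B)
    (he : ∀ᶠ x in 𝓝 (0 : Fin m → ℝ), ∀ u, B x u = β x u) :
    ∀ᶠ x in 𝓝 (0 : Fin m → ℝ), ∀ u v, extD1 m β x u v = fderiv ℝ B x u v - fderiv ℝ B x v u := by
  filter_upwards [he.eventually_nhds] with x h2 u v
  have hd : DifferentiableAt ℝ B x := (hB.differentiable (by simp)).differentiableAt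
  have e : ∀ a b, fderiv ℝ B x a b = fderiv ℝ (fun y => β y b) x a := by
    intro a b
    have : (fun q => B q b) =ᶠ[𝓝 x] fun y => β y b := by
      filter_upwards [h2] with y hy using hy b
    rw [← this.fderiv_eq, fderiv_clm_apply hd (differentiableAt_const b)]
    simp
  rw [e, e]
  rfl

lemma diffeo1_map {φ : ℝ → ℝ} (h : IsDiffeoGerm1 φ) : Filter.map φ (𝓝 0) = 𝓝 0 := by
  obtain ⟨h0, ⟨U, hU, hs⟩, hd⟩ := h
  have h1 : HasStrictDerivAt φ (deriv φ 0) 0 :=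
    (hs.contDiffAt hU).hasStrictDerivAt (by simp)
  have := h1.map_nhds_eq hd
  rwa [h0] at this

lemma linIndep_transfer {k : ℕ} (hk : k ≤ m) (μ : Fin k → ℕ) (hμ : ∀ i, 0 < μ i)
    (hl : LinIndepNonneg μ) :
    ∀ i j : Fin m, (i:ℕ) < k → (j:ℕ) < k → i ≠ j →
      ∀ s ∈ expS (fun i : Fin m => (i:ℕ) < k) (fun i => if h : (i:ℕ) < k then μ ⟨i, h⟩ else 1),
      (fun i : Fin m => if h : (i:ℕ) < k then μ ⟨i, h⟩ else 1) j ≠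
        (fun i : Fin m => if h : (i:ℕ) < k then μ ⟨i, h⟩ else 1) i + s := by
  intro i j hi hj hij s hs
  refine expS_indep (fun i : Fin m => (i:ℕ) < k) (fun i => if h : (i:ℕ) < k then μ ⟨i, h⟩ else 1)
    ?_ ?_ i j hi hj hij s hs
  · intro i hi
    simp only [hi, dite_true]
    exact hμ _
  · intro j hj c
    have := hl ⟨j, hj⟩ (fun i => c (Fin.castLE hk i))
    simp only [hj, dite_true]
    intro hcon
    apply this
    rw [hcon]
    symm
    refine Finset.sum_bij (fun i _ => Fin.castLE hk i) ?_ ?_ ?_ ?_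
    · intro a ha
      simp at ha ⊢
      intro h; apply ha; ext; simpa using congrArg Fin.val h
    · intro a _ b _ h
      exact Fin.castLE_injective hk h
    · intro b hb
      simp at hb
      refine ⟨⟨b, hb.2⟩, ?_, ?_⟩
      · simp
        intro h; apply hb.1; ext; exact h
      · rfl
    · intro a _
      simp
end final

section final2
variable {m : ℕ}

lemma glob_diffeo {Φ : (Fin m → ℝ) → (Fin m → ℝ)} (h : IsDiffeoGerm m Φ) :
    ∃ P : (Fin m → ℝ) → (Fin m → ℝ), ContDiff ℝ (⊤ : ℕ∞) P ∧ P =ᶠ[𝓝 0] Φ ∧ P 0 = 0 ∧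
      ∃ D : (Fin m → ℝ) ≃L[ℝ] (Fin m → ℝ),
        HasFDerivAt P (D : (Fin m → ℝ) →L[ℝ] (Fin m → ℝ)) 0 := by
  obtain ⟨h0, hs, D, hD⟩ := h
  obtain ⟨P, hP, he⟩ := globalize Φ 0 hs
  exact ⟨P, hP, he, by rw [he.self_of_nhds, h0], D, hD.congr_of_eventuallyEq he⟩

lemma glob_inv {P : (Fin m → ℝ) → (Fin m → ℝ)} (hP : ContDiff ℝ (⊤ : ℕ∞) P) (P0 : P 0 = 0)
    (D : (Fin m → ℝ) ≃L[ℝ] (Fin m → ℝ))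
    (hD : HasFDerivAt P (D : (Fin m → ℝ) →L[ℝ] (Fin m → ℝ)) 0) :
    ∃ Q : (Fin m → ℝ) → (Fin m → ℝ), ContDiff ℝ (⊤ : ℕ∞) Q ∧ Q 0 = 0 ∧
      (∀ᶠ x in 𝓝 0, Q (P x) = x) ∧ (∀ᶠ y in 𝓝 0, P (Q y) = y) := by
  obtain ⟨g, ⟨U, hU, -, hg⟩, g0, h1, h2⟩ := smooth_inverse P hP 0 D hD
  rw [P0] at hU g0 h2
  obtain ⟨Q, hQ, he⟩ := globalize g 0 ⟨U, hU, hg⟩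
  have hPc : Tendsto P (𝓝 0) (𝓝 0) := by
    have := hP.continuous.tendsto 0; rwa [P0] at this
  refine ⟨Q, hQ, by rw [he.self_of_nhds, g0], ?_, ?_⟩
  · filter_upwards [h1, hPc.eventually he] with x a b
    rw [b, a]
  · filter_upwards [h2, he] with x a b
    rw [b, a]

theorem hard_dir (ω : Form2 m) (hω : IsSymplecticGerm m ω)
    (f₁ f₂ : ℝ → (Fin m → ℝ)) (hf₁ : IsCurveGerm m f₁)
    (hq₁ : IsQuasiHomogeneousCurve m f₁)
    (Θ : (Fin m → ℝ) → (Fin m → ℝ)) (ψ : ℝ → ℝ)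
    (hΘ : IsDiffeoGerm m Θ) (hψ : IsDiffeoGerm1 ψ)
    (hf : ∀ᶠ t in 𝓝 (0 : ℝ), Θ (f₁ t) = f₂ (ψ t))
    (hs : SameAR2 m (pull2 m Θ ω) ω f₁) :
    ∃ (φ : ℝ → ℝ) (Φ : (Fin m → ℝ) → (Fin m → ℝ)),
        IsDiffeoGerm1 φ ∧ IsDiffeoGerm m Φ ∧
        (∀ᶠ x in 𝓝 (0 : Fin m → ℝ), ∀ u v, pull2 m Φ ω x u v = ω x u v) ∧
        ∀ᶠ t in 𝓝 (0 : ℝ), Φ (f₁ t) = f₂ (φ t) := by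
  obtain ⟨hform, hclosed, hnd⟩ := hω
  obtain ⟨a, b, ha, hb, hav, hbv, hab⟩ := hs
  obtain ⟨k, -, hk, μ, -, hμ, hl, φ₀, Φ₀, hφ₀, hΦ₀, hcv⟩ := hq₁
  obtain ⟨A0, hA0, sA0, eA0⟩ := glob2 hform
  obtain ⟨α, hα, sα, eα⟩ := glob2 ha
  obtain ⟨β, hβ, eβ⟩ := glob1 hb
  obtain ⟨T, hT, eT, T0, DT, hDT⟩ := glob_diffeo hΘ
  obtain ⟨P, hP, eP, P0, DP, hDP⟩ := glob_diffeo hΦ₀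
  obtain ⟨Q, hQ, Q0, hQP, hPQ⟩ := glob_inv hP P0 DP hDP
  have hTc : Tendsto T (𝓝 0) (𝓝 0) := by
    have := hT.continuous.tendsto 0; rwa [T0] at this
  have c0 := closed_glob hclosed hA0 eA0
  have hA1 : ContDiff ℝ (⊤ : ℕ∞) (pbk T A0) := pbk_contDiff hT hA0
  have c1 : ∀ᶠ x in 𝓝 (0 : Fin m → ℝ), ClosedAt (pbk T A0) x := by
    filter_upwards [hTc.eventually c0] with x hx
    exact pbk_closed ((contDiff_infty.1 hT 2).contDiffAt) (hA0.differentiable (by simp)).differentiableAt sA0 hx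
      (hA1.differentiable (by simp)).differentiableAt
  have n0 : ∀ u, (∀ v, A0 0 u v = 0) → u = 0 := by
    intro u hu
    refine hnd.self_of_nhds u fun v => ?_
    rw [← eA0.self_of_nhds u v]; exact hu v
  have n1 : ∀ u, (∀ v, pbk T A0 0 u v = 0) → u = 0 := by
    intro u hu
    have : DT u = 0 := by
      refine n0 _ fun v => ?_
      have := hu (DT.symm v)
      rw [pbk_apply, hDT.fderiv, T0] at this
      simpa using this
    simpa using this
  have e1 : ∀ᶠ x in 𝓝 (0 : Fin m → ℝ), ∀ u v, pbk T A0 x u v = pull2 m Θ ω x u v := by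
    filter_upwards [eT.eventually_nhds, hTc.eventually eA0] with x h1 h2 u v
    rw [pbk_apply, h2, Filter.EventuallyEq.fderiv_eq h1, h1.self_of_nhds]
    rfl
  have hd : ∀ᶠ x in 𝓝 (0 : Fin m → ℝ), ∀ u v, pbk T A0 x u v - A0 x u v = α x u v +
      (fderiv ℝ β x u v - fderiv ℝ β x v u) := by
    filter_upwards [e1, eA0, eα, extD_glob hβ eβ, hab] with x h1 h2 h3 h4 h5 u v
    rw [h1, h2, h3, ← h4]
    exact h5 u v
  set K : Fin m → Prop := fun i => (i:ℕ) < k with hK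
  set μ' : Fin m → ℕ := fun i => if h : (i:ℕ) < k then μ ⟨i, h⟩ else 1 with hμ'
  have hmono : ∀ t : ℝ, (fun i : Fin m => if h : (i : ℕ) < k then t ^ μ ⟨i, h⟩ else 0)
      = monoC K μ' t := by
    intro t; ext i
    by_cases h : (i:ℕ) < k
    · simp [monoC, K, μ', h]
    · simp [monoC, K, h]
  have hfc : Tendsto f₁ (𝓝 0) (𝓝 0) := by
    have := (germ_diff hf₁.2).self_of_nhds.continuousAt.tendsto
    rwa [hf₁.1] at this
  have hφmap := diffeo1_map hφ₀
  have hφc : Tendsto φ₀ (𝓝 0) (𝓝 0) := hφmap.le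
  have hfQ : ∀ᶠ t in 𝓝 (0:ℝ), f₁ t = Q (monoC K μ' (φ₀ t)) := by
    filter_upwards [hcv, hfc.eventually hQP, hfc.eventually eP] with t h1 h2 h3
    rw [← h2, h3, h1, hmono]
  have htr : ∀ p : (Fin m → ℝ) → Prop, (∀ᶠ t in 𝓝 (0:ℝ), p (f₁ t)) →
      ∀ᶠ s in 𝓝 (0:ℝ), p (Q (monoC K μ' s)) := by
    intro p hp
    rw [← hφmap, eventually_map]
    filter_upwards [hp, hfQ] with t h1 h2
    rwa [← h2]
  have hαc : ∀ᶠ s in 𝓝 (0:ℝ), α (Q (monoC K μ' s)) = 0 := by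
    apply htr (fun x => α x = 0)
    filter_upwards [hav, hfc.eventually eα] with t h1 h2
    ext1 u; ext1 v
    rw [h2, h1]; rfl
  have hβc : ∀ᶠ s in 𝓝 (0:ℝ), β (Q (monoC K μ' s)) = 0 := by
    apply htr (fun x => β x = 0)
    filter_upwards [hbv, hfc.eventually eβ] with t h1 h2
    ext1 u
    rw [h2, h1]; rfl
  have hμ0 : ∀ i, K i → 0 < μ' i := by
    intro i hi
    have hi' : (i:ℕ) < k := hi
    simp only [μ', hi', dite_true]
    exact hμ _
  obtain ⟨Ψ, Ψ0, Ψs, Ψc, Ψp⟩ := core_thm K μ' hμ0 (linIndep_transfer hk μ hμ hl) hA0 hA1 hα hβ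
    sA0 (pbk_skew T sA0) sα c0 c1 n0 n1 hd P Q hP hQ P0 Q0 hQP hPQ hαc hβc
  have hΨc : Tendsto Ψ (𝓝 0) (𝓝 0) := by
    have := (germ_diff Ψs).self_of_nhds.continuousAt.tendsto
    rwa [Ψ0] at this
  refine ⟨ψ, Θ ∘ Ψ, hψ, ⟨by simp [Ψ0, hΘ.1], germ_comp Ψs (by rw [Ψ0]; exact hΘ.2.1), ?_⟩, ?_, ?_⟩
  · obtain ⟨-, -, D, hD⟩ := hΘ
    have hinj : Function.Injective (fderiv ℝ Ψ 0 : (Fin m → ℝ) →ₗ[ℝ] (Fin m → ℝ)) := by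
      rw [injective_iff_map_eq_zero]
      intro u hu
      refine n0 u fun v => ?_
      have hu' : fderiv ℝ Ψ 0 u = 0 := hu
      rw [← Ψp.self_of_nhds u v, hu']
      simp
    let L := (LinearEquiv.ofInjectiveEndo _ hinj).toContinuousLinearEquiv
    have hL : (L : (Fin m → ℝ) →L[ℝ] (Fin m → ℝ)) = fderiv ℝ Ψ 0 := by
      ext1 u; rfl
    refine ⟨L.trans D, ?_⟩
    have h1 : HasFDerivAt Ψ (L : (Fin m → ℝ) →L[ℝ] (Fin m → ℝ)) 0 := by
      rw [hL]; exact (germ_diff Ψs).self_of_nhds.hasFDerivAt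
    have h2 : HasFDerivAt Θ (D : (Fin m → ℝ) →L[ℝ] (Fin m → ℝ)) (Ψ 0) := by rwa [Ψ0]
    exact h2.comp 0 h1
  · filter_upwards [Ψp, hΨc.eventually e1, germ_diff Ψs, hΨc.eventually (germ_diff hΘ.2.1), eA0]
      with x h1 h2 h3 h4 h5 u v
    rw [← h5, ← h1, h2]
    unfold pull2
    rw [fderiv_comp x h4 h3]
    rfl
  · filter_upwards [hf, hfQ, hφc.eventually Ψc] with t h1 h2 h3
    rw [← h1, Function.comp_apply, h2, h3]
end final2

/-- Two quasi-homogeneous curve-germs are symplectomorphic in `(ℝ^{2n},ω)` if and only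
if the algebraic restrictions `[ω]_{f₁}` and `[ω]_{f₂}` are diffeomorphic. -/
theorem symplectomorphic_iff_algRestrictions_diffeomorphic
    (n : ℕ) (ω : Form2 (2*n)) (hω : IsSymplecticGerm (2*n) ω)
    (f₁ f₂ : ℝ → (Fin (2*n) → ℝ))
    (hf₁ : IsCurveGerm (2*n) f₁) (hf₂ : IsCurveGerm (2*n) f₂)
    (hq₁ : IsQuasiHomogeneousCurve (2*n) f₁) (hq₂ : IsQuasiHomogeneousCurve (2*n) f₂) :
    (∃ (φ : ℝ → ℝ) (Φ : (Fin (2*n) → ℝ) → (Fin (2*n) → ℝ)),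
        IsDiffeoGerm1 φ ∧ IsDiffeoGerm (2*n) Φ ∧
        (∀ᶠ x in 𝓝 (0 : Fin (2*n) → ℝ), ∀ u v, pull2 (2*n) Φ ω x u v = ω x u v) ∧
        ∀ᶠ t in 𝓝 (0 : ℝ), Φ (f₁ t) = f₂ (φ t)) ↔
    (∃ (Θ : (Fin (2*n) → ℝ) → (Fin (2*n) → ℝ)) (ψ : ℝ → ℝ),
        IsDiffeoGerm (2*n) Θ ∧ IsDiffeoGerm1 ψ ∧
        (∀ᶠ t in 𝓝 (0 : ℝ), Θ (f₁ t) = f₂ (ψ t)) ∧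
        SameAR2 (2*n) (pull2 (2*n) Θ ω) ω f₁) := by
  constructor
  · rintro ⟨φ, Φ, h1, h2, h3, h4⟩
    refine ⟨Φ, φ, h2, h1, h4, fun _ _ _ => 0, fun _ _ => 0, ⟨by simp, by simp, fun _ _ =>
      ⟨Set.univ, univ_mem, contDiffOn_const⟩⟩, ⟨by simp, fun _ =>
      ⟨Set.univ, univ_mem, contDiffOn_const⟩⟩, Eventually.of_forall fun _ _ _ => rfl,
      Eventually.of_forall fun _ _ => rfl, ?_⟩
    filter_upwards [h3] with x hx u v
    simp [hx, extD1]
  · rintro ⟨Θ, ψ, h1, h2, h3, h4⟩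
    exact hard_dir ω hω f₁ f₂ hf₁ hq₁ Θ ψ h1 h2 h3 h4
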